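/- arXiv:2603.18269 — 3 statements merged into one kernel-verified Lean document; each statement's English description precedes it below -/
import Mathlib

section
/- Let M and N be two classical solutions of the initial-boundary value problem Σ_{τ,τ'}, i.e. 4-tuples of real functions that are continuous on 𝒫, possess all first-order partial derivatives on the interior of 𝒫, and satisfy the Broadwell system together with the initial and boundary conditions. Then M = N. -/
open Set MeasureTheory

noncomputable section

/-- The Broadwell collision term `Q(N) = 2cS (N₂N₃ - N₁N₄)` (indexing `N₁ = M 0`, …). -/
def QQ (c S : ℝ) (M : Fin 4 → ℝ → ℝ → ℝ → ℝ) (t x y : ℝ) : ℝ :=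
  2 * c * S * (M 1 t x y * M 2 t x y - M 0 t x y * M 3 t x y)

/-- Signs of `Q` in the four Broadwell equations. -/
def sgn4 : Fin 4 → ℝ := ![1, -1, -1, 1]

/-- `x`-components of the four velocities. -/
def spX (c : ℝ) : Fin 4 → ℝ := ![c, 0, 0, -c]

/-- `y`-components of the four velocities. -/
def spY (c : ℝ) : Fin 4 → ℝ := ![0, c, -c, 0]

/-- Partial derivative in `t`. -/
def pdtF (f : ℝ → ℝ → ℝ → ℝ) (t x y : ℝ) : ℝ := deriv (fun s => f s x y) t

/-- Partial derivative in `x`. -/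
def pdxF (f : ℝ → ℝ → ℝ → ℝ) (t x y : ℝ) : ℝ := deriv (fun s => f t s y) x

/-- Partial derivative in `y`. -/
def pdyF (f : ℝ → ℝ → ℝ → ℝ) (t x y : ℝ) : ℝ := deriv (fun s => f t x s) y

/-- `f` possesses all three first-order partial derivatives at `p`. -/
def HasPartials (f : ℝ → ℝ → ℝ → ℝ) (p : ℝ × ℝ × ℝ) : Prop :=
  DifferentiableAt ℝ (fun s => f s p.2.1 p.2.2) p.1 ∧
  DifferentiableAt ℝ (fun s => f p.1 s p.2.2) p.2.1 ∧
  DifferentiableAt ℝ (fun s => f p.1 p.2.1 s) p.2.2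

/-- Continuity of a curried function of three real variables on a set. -/
def Cont3 (f : ℝ → ℝ → ℝ → ℝ) (D : Set (ℝ × ℝ × ℝ)) : Prop :=
  ContinuousOn (fun p : ℝ × ℝ × ℝ => f p.1 p.2.1 p.2.2) D

/-- Sup norm over `D` of a function of three variables. -/
def supNorm3 (D : Set (ℝ × ℝ × ℝ)) (f : ℝ → ℝ → ℝ → ℝ) : ℝ :=
  sSup ((fun p : ℝ × ℝ × ℝ => |f p.1 p.2.1 p.2.2|) '' D)

/-- `‖N‖ = max_i ‖N_i‖_∞` over `D`. -/
def norm4 (D : Set (ℝ × ℝ × ℝ)) (M : Fin 4 → ℝ → ℝ → ℝ → ℝ) : ℝ :=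
  max (max (supNorm3 D (M 0)) (supNorm3 D (M 1))) (max (supNorm3 D (M 2)) (supNorm3 D (M 3)))

/-- Sup norm over `D` of a function of two variables. -/
def supNorm2 (D : Set (ℝ × ℝ)) (f : ℝ → ℝ → ℝ) : ℝ :=
  sSup ((fun p : ℝ × ℝ => |f p.1 p.2|) '' D)

/-- `‖g‖₁` for a function of two variables: max of the sup norms of `g` and its two
first-order partial derivatives over `D`. -/
def norm1Two (D : Set (ℝ × ℝ)) (f : ℝ → ℝ → ℝ) : ℝ :=
  max (supNorm2 D f)
    (max (supNorm2 D (fun a b => deriv (fun u => f u b) a))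
      (supNorm2 D (fun a b => deriv (fun v => f a v) b)))

/-- The space-time slab `T × [a₁,b₁] × [a₂,b₂]`. -/
def PsetT (T : Set ℝ) (a₁ b₁ a₂ b₂ : ℝ) : Set (ℝ × ℝ × ℝ) := T ×ˢ Icc a₁ b₁ ×ˢ Icc a₂ b₂

/-- The spatial rectangle `[a₁,b₁] × [a₂,b₂]`. -/
def Rect2 (a₁ b₁ a₂ b₂ : ℝ) : Set (ℝ × ℝ) := Icc a₁ b₁ ×ˢ Icc a₂ b₂

/-- A function of two variables which is continuous and bounded on `D` with continuous
and bounded first-order partial derivatives on `D`. -/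
def Smooth2 (D : Set (ℝ × ℝ)) (f : ℝ → ℝ → ℝ) : Prop :=
  ContinuousOn (fun p : ℝ × ℝ => f p.1 p.2) D ∧
  (∀ p ∈ D, DifferentiableAt ℝ (fun u => f u p.2) p.1 ∧
    DifferentiableAt ℝ (fun v => f p.1 v) p.2) ∧
  ContinuousOn (fun p : ℝ × ℝ => deriv (fun u => f u p.2) p.1) D ∧
  ContinuousOn (fun p : ℝ × ℝ => deriv (fun v => f p.1 v) p.2) D ∧
  ∃ C, ∀ p ∈ D, |f p.1 p.2| ≤ C ∧
    |deriv (fun u => f u p.2) p.1| ≤ C ∧ |deriv (fun v => f p.1 v) p.2| ≤ C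

/-- Nonnegativity of a function of two variables on `D`. -/
def Nonneg2 (D : Set (ℝ × ℝ)) (f : ℝ → ℝ → ℝ) : Prop := ∀ p ∈ D, 0 ≤ f p.1 p.2

/-- The initial data `N0` and boundary data `B1, B2, B3, B4` are nonnegative, continuous
and bounded with continuous bounded first-order partial derivatives, and satisfy the
compatibility conditions at time `t0`. -/
def NiceData (T : Set ℝ) (t0 a₁ b₁ a₂ b₂ : ℝ) (N0 : Fin 4 → ℝ → ℝ → ℝ)
    (B1 B2 B3 B4 : ℝ → ℝ → ℝ) : Prop :=
  (∀ i, Smooth2 (Rect2 a₁ b₁ a₂ b₂) (N0 i) ∧ Nonneg2 (Rect2 a₁ b₁ a₂ b₂) (N0 i)) ∧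
  (Smooth2 (T ×ˢ Icc a₂ b₂) B1 ∧ Nonneg2 (T ×ˢ Icc a₂ b₂) B1) ∧
  (Smooth2 (T ×ˢ Icc a₁ b₁) B2 ∧ Nonneg2 (T ×ˢ Icc a₁ b₁) B2) ∧
  (Smooth2 (T ×ˢ Icc a₁ b₁) B3 ∧ Nonneg2 (T ×ˢ Icc a₁ b₁) B3) ∧
  (Smooth2 (T ×ˢ Icc a₂ b₂) B4 ∧ Nonneg2 (T ×ˢ Icc a₂ b₂) B4) ∧
  (∀ y ∈ Icc a₂ b₂, N0 0 a₁ y = B1 t0 y) ∧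
  (∀ x ∈ Icc a₁ b₁, N0 1 x a₂ = B2 t0 x) ∧
  (∀ x ∈ Icc a₁ b₁, N0 2 x b₂ = B3 t0 x) ∧
  (∀ y ∈ Icc a₂ b₂, N0 3 b₁ y = B4 t0 y)

/-- `N` is a classical solution of the initial-boundary value problem for the planar
four-velocity Broadwell model on `T × [a₁,b₁] × [a₂,b₂]`, with initial time `t0`,
initial data `N0` and boundary data `B1, B2, B3, B4`. -/
def IsSol (c S : ℝ) (T : Set ℝ) (t0 a₁ b₁ a₂ b₂ : ℝ) (N0 : Fin 4 → ℝ → ℝ → ℝ)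
    (B1 B2 B3 B4 : ℝ → ℝ → ℝ) (N : Fin 4 → ℝ → ℝ → ℝ → ℝ) : Prop :=
  (∀ i, Cont3 (N i) (PsetT T a₁ b₁ a₂ b₂)) ∧
  (∀ i, ∀ p ∈ interior (PsetT T a₁ b₁ a₂ b₂), HasPartials (N i) p) ∧
  (∀ i, ∀ p ∈ interior (PsetT T a₁ b₁ a₂ b₂),
    pdtF (N i) p.1 p.2.1 p.2.2 + spX c i * pdxF (N i) p.1 p.2.1 p.2.2 +
      spY c i * pdyF (N i) p.1 p.2.1 p.2.2 = sgn4 i * QQ c S N p.1 p.2.1 p.2.2) ∧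
  (∀ i, ∀ x ∈ Icc a₁ b₁, ∀ y ∈ Icc a₂ b₂, N i t0 x y = N0 i x y) ∧
  (∀ t ∈ T, ∀ y ∈ Icc a₂ b₂, N 0 t a₁ y = B1 t y) ∧
  (∀ t ∈ T, ∀ x ∈ Icc a₁ b₁, N 1 t x a₂ = B2 t x) ∧
  (∀ t ∈ T, ∀ x ∈ Icc a₁ b₁, N 2 t x b₂ = B3 t x) ∧
  (∀ t ∈ T, ∀ y ∈ Icc a₂ b₂, N 3 t b₁ y = B4 t y)

/-- The operator `𝒯`, defined by integration along the characteristics. -/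
def Tcal (c S τ a₁ b₁ a₂ b₂ : ℝ) (N0 : Fin 4 → ℝ → ℝ → ℝ) (B1 B2 B3 B4 : ℝ → ℝ → ℝ)
    (M : Fin 4 → ℝ → ℝ → ℝ → ℝ) : Fin 4 → ℝ → ℝ → ℝ → ℝ :=
  ![fun t x y =>
      if a₁ ≤ x - c * (t - τ) then
        (∫ s in τ..t, QQ c S M s (x + c * (s - t)) y) + N0 0 (x - c * (t - τ)) y
      else
        (∫ s in (t - (x - a₁) / c)..t, QQ c S M s (x + c * (s - t)) y) +
          B1 (t - (x - a₁) / c) y,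
    fun t x y =>
      if a₂ ≤ y - c * (t - τ) then
        (∫ s in τ..t, -QQ c S M s x (y + c * (s - t))) + N0 1 x (y - c * (t - τ))
      else
        (∫ s in (t - (y - a₂) / c)..t, -QQ c S M s x (y + c * (s - t))) +
          B2 (t - (y - a₂) / c) x,
    fun t x y =>
      if y + c * (t - τ) ≤ b₂ then
        (∫ s in τ..t, -QQ c S M s x (y - c * (s - t))) + N0 2 x (y + c * (t - τ))
      else
        (∫ s in (t - (b₂ - y) / c)..t, -QQ c S M s x (y - c * (s - t))) +
          B3 (t - (b₂ - y) / c) x,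
    fun t x y =>
      if x + c * (t - τ) ≤ b₁ then
        (∫ s in τ..t, QQ c S M s (x - c * (s - t)) y) + N0 3 (x + c * (t - τ)) y
      else
        (∫ s in (t - (b₁ - x) / c)..t, QQ c S M s (x - c * (s - t)) y) +
          B4 (t - (b₁ - x) / c) y]

/-- `ρ(|M|) = |M₁| + |M₂| + |M₃| + |M₄|`. -/
def rhoA (M : Fin 4 → ℝ → ℝ → ℝ → ℝ) (t x y : ℝ) : ℝ :=
  |M 0 t x y| + |M 1 t x y| + |M 2 t x y| + |M 3 t x y|

/-- `Q(|M|)`. -/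
def QQa (c S : ℝ) (M : Fin 4 → ℝ → ℝ → ℝ → ℝ) (t x y : ℝ) : ℝ :=
  2 * c * S * (|M 1 t x y| * |M 2 t x y| - |M 0 t x y| * |M 3 t x y|)

/-- `Q_i^σ(|M|) = σ ρ(|M|) |M_i| ± Q(|M|)`. -/
def Qsig (c S σ : ℝ) (i : Fin 4) (M : Fin 4 → ℝ → ℝ → ℝ → ℝ) (t x y : ℝ) : ℝ :=
  σ * rhoA M t x y * |M i t x y| + sgn4 i * QQa c S M t x y

/-- Duhamel formula with integrating factor along the `i`-th characteristic, starting at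
time `t0` with datum `datum`. -/
def duh (c S σ : ℝ) (i : Fin 4) (M : Fin 4 → ℝ → ℝ → ℝ → ℝ) (t0 t x y datum : ℝ) : ℝ :=
  ((∫ s in t0..t,
      Real.exp (σ * ∫ r in t0..s,
        rhoA M r (x + spX c i * (r - t)) (y + spY c i * (r - t))) *
        Qsig c S σ i M s (x + spX c i * (s - t)) (y + spY c i * (s - t))) + datum) *
    Real.exp (-(σ * ∫ s in t0..t, rhoA M s (x + spX c i * (s - t)) (y + spY c i * (s - t))))

/-- The operator `𝒯^σ`. -/
def Tsig (c S σ τ a₁ b₁ a₂ b₂ : ℝ) (N0 : Fin 4 → ℝ → ℝ → ℝ) (B1 B2 B3 B4 : ℝ → ℝ → ℝ)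
    (M : Fin 4 → ℝ → ℝ → ℝ → ℝ) : Fin 4 → ℝ → ℝ → ℝ → ℝ :=
  ![fun t x y =>
      if a₁ ≤ x - c * (t - τ) then duh c S σ 0 M τ t x y (N0 0 (x - c * (t - τ)) y)
      else duh c S σ 0 M (t - (x - a₁) / c) t x y (B1 (t - (x - a₁) / c) y),
    fun t x y =>
      if a₂ ≤ y - c * (t - τ) then duh c S σ 1 M τ t x y (N0 1 x (y - c * (t - τ)))
      else duh c S σ 1 M (t - (y - a₂) / c) t x y (B2 (t - (y - a₂) / c) x),
    fun t x y =>
      if y + c * (t - τ) ≤ b₂ then duh c S σ 2 M τ t x y (N0 2 x (y + c * (t - τ)))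
      else duh c S σ 2 M (t - (b₂ - y) / c) t x y (B3 (t - (b₂ - y) / c) x),
    fun t x y =>
      if x + c * (t - τ) ≤ b₁ then duh c S σ 3 M τ t x y (N0 3 (x + c * (t - τ)) y)
      else duh c S σ 3 M (t - (b₁ - x) / c) t x y (B4 (t - (b₁ - x) / c) y)]

/-- Complement of the four exceptional planes. -/
def offPlanes (c τ a₁ b₁ a₂ b₂ : ℝ) : Set (ℝ × ℝ × ℝ) :=
  {p | p.2.1 - c * (p.1 - τ) ≠ a₁ ∧ p.2.2 - c * (p.1 - τ) ≠ a₂ ∧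
    p.2.2 + c * (p.1 - τ) ≠ b₂ ∧ p.2.1 + c * (p.1 - τ) ≠ b₁}

/-- The interior of `𝒫` minus the four exceptional planes. -/
def Dset (c τ τ' a₁ b₁ a₂ b₂ : ℝ) : Set (ℝ × ℝ × ℝ) :=
  (Ioo τ τ' ×ˢ Ioo a₁ b₁ ×ˢ Ioo a₂ b₂) ∩ offPlanes c τ a₁ b₁ a₂ b₂

/-- `u` has first-order partial derivatives on `D`, continuous and bounded there. -/
def DerivReg (D : Set (ℝ × ℝ × ℝ)) (u : ℝ → ℝ → ℝ → ℝ) : Prop :=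
  (∀ p ∈ D, HasPartials u p) ∧
  Cont3 (pdtF u) D ∧ Cont3 (pdxF u) D ∧ Cont3 (pdyF u) D ∧
  ∃ C, ∀ p ∈ D, |pdtF u p.1 p.2.1 p.2.2| ≤ C ∧
    |pdxF u p.1 p.2.1 p.2.2| ≤ C ∧ |pdyF u p.1 p.2.1 p.2.2| ≤ C

/-- Membership in the space `E`: continuity on `𝒫` plus regularity of the first-order
partial derivatives off the four exceptional planes. -/
def memE (c τ τ' a₁ b₁ a₂ b₂ : ℝ) (u : ℝ → ℝ → ℝ → ℝ) : Prop :=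
  Cont3 u (PsetT (Icc τ τ') a₁ b₁ a₂ b₂) ∧ DerivReg (Dset c τ τ' a₁ b₁ a₂ b₂) u

/-- `‖u‖₁`: the max of the sup norm of `u` over `P` and of the sup norms of its
first-order partial derivatives over `D`. -/
def norm1E (P D : Set (ℝ × ℝ × ℝ)) (u : ℝ → ℝ → ℝ → ℝ) : ℝ :=
  max (supNorm3 P u)
    (max (supNorm3 D (pdtF u)) (max (supNorm3 D (pdxF u)) (supNorm3 D (pdyF u))))

/-- `𝒩(N) = max_i ‖N_i‖₁`. -/
def NN4 (P D : Set (ℝ × ℝ × ℝ)) (N : Fin 4 → ℝ → ℝ → ℝ → ℝ) : ℝ :=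
  max (max (norm1E P D (N 0)) (norm1E P D (N 1)))
    (max (norm1E P D (N 2)) (norm1E P D (N 3)))

/-- The convex set `𝓜_R = {N ∈ E⁴ : 𝒩(N) ≤ R}`. -/
def MR (c τ τ' a₁ b₁ a₂ b₂ R : ℝ) : Set (Fin 4 → ℝ → ℝ → ℝ → ℝ) :=
  {N | (∀ i, memE c τ τ' a₁ b₁ a₂ b₂ (N i)) ∧
    NN4 (PsetT (Icc τ τ') a₁ b₁ a₂ b₂) (Dset c τ τ' a₁ b₁ a₂ b₂) N ≤ R}

/-- The transported initial datum `N̄_i^τ`. -/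
def barN0 (c τ : ℝ) (N0 : Fin 4 → ℝ → ℝ → ℝ) (i : Fin 4) : ℝ → ℝ → ℝ → ℝ :=
  fun t x y => N0 i (x - spX c i * (t - τ)) (y - spY c i * (t - τ))

/-- The transported boundary data `N̄₁⁻, N̄₂⁻, N̄₃⁺, N̄₄⁺`. -/
def barB (c a₁ b₁ a₂ b₂ : ℝ) (B1 B2 B3 B4 : ℝ → ℝ → ℝ) : Fin 4 → ℝ → ℝ → ℝ → ℝ :=
  ![fun t x y => B1 (t - (x - a₁) / c) y,
    fun t x y => B2 (t - (y - a₂) / c) x,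
    fun t x y => B3 (t - (b₂ - y) / c) x,
    fun t x y => B4 (t - (b₁ - x) / c) y]

/-- Domain of definition of the transported initial datum `N̄_i^τ` inside `𝒫`. -/
def domBar0 (c τ a₁ b₁ a₂ b₂ : ℝ) (T : Set ℝ) (i : Fin 4) : Set (ℝ × ℝ × ℝ) :=
  PsetT T a₁ b₁ a₂ b₂ ∩
    {p | (p.2.1 - spX c i * (p.1 - τ), p.2.2 - spY c i * (p.1 - τ)) ∈ Rect2 a₁ b₁ a₂ b₂}

/-- Domains of definition of the transported boundary data inside `𝒫`. -/
def domBarB (c a₁ b₁ a₂ b₂ : ℝ) (T : Set ℝ) : Fin 4 → Set (ℝ × ℝ × ℝ) :=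
  ![PsetT T a₁ b₁ a₂ b₂ ∩ {p | p.1 - (p.2.1 - a₁) / c ∈ T},
    PsetT T a₁ b₁ a₂ b₂ ∩ {p | p.1 - (p.2.2 - a₂) / c ∈ T},
    PsetT T a₁ b₁ a₂ b₂ ∩ {p | p.1 - (b₂ - p.2.2) / c ∈ T},
    PsetT T a₁ b₁ a₂ b₂ ∩ {p | p.1 - (b₁ - p.2.1) / c ∈ T}]

/-- `‖N̄_i^τ‖₁`. -/
def nb0 (c τ a₁ b₁ a₂ b₂ : ℝ) (T : Set ℝ) (N0 : Fin 4 → ℝ → ℝ → ℝ) (i : Fin 4) : ℝ :=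
  norm1E (domBar0 c τ a₁ b₁ a₂ b₂ T i) (domBar0 c τ a₁ b₁ a₂ b₂ T i) (barN0 c τ N0 i)

/-- `‖N̄₁⁻‖₁`, `‖N̄₂⁻‖₁`, `‖N̄₃⁺‖₁`, `‖N̄₄⁺‖₁`. -/
def nbB (c a₁ b₁ a₂ b₂ : ℝ) (T : Set ℝ) (B1 B2 B3 B4 : ℝ → ℝ → ℝ) (i : Fin 4) : ℝ :=
  norm1E (domBarB c a₁ b₁ a₂ b₂ T i) (domBarB c a₁ b₁ a₂ b₂ T i)
    (barB c a₁ b₁ a₂ b₂ B1 B2 B3 B4 i)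

/-- `q`: the max of the `‖·‖₁` norms of the eight transported data functions. -/
def qval (c τ a₁ b₁ a₂ b₂ : ℝ) (T : Set ℝ) (N0 : Fin 4 → ℝ → ℝ → ℝ)
    (B1 B2 B3 B4 : ℝ → ℝ → ℝ) : ℝ :=
  max
    (max (max (nb0 c τ a₁ b₁ a₂ b₂ T N0 0) (nb0 c τ a₁ b₁ a₂ b₂ T N0 1))
      (max (nb0 c τ a₁ b₁ a₂ b₂ T N0 2) (nb0 c τ a₁ b₁ a₂ b₂ T N0 3)))
    (max (max (nbB c a₁ b₁ a₂ b₂ T B1 B2 B3 B4 0) (nbB c a₁ b₁ a₂ b₂ T B1 B2 B3 B4 1))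
      (max (nbB c a₁ b₁ a₂ b₂ T B1 B2 B3 B4 2) (nbB c a₁ b₁ a₂ b₂ T B1 B2 B3 B4 3)))

/-- `μ = 8 + 4/c + 8c`. -/
def muc (c : ℝ) : ℝ := 8 + 4 / c + 8 * c

/-- `λ = 16 + 16c`. -/
def lamc (c : ℝ) : ℝ := 16 + 16 * c

/-- `δ = 4/c + 8 + 4c`. -/
def delc (c : ℝ) : ℝ := 4 / c + 8 + 4 * c

/-- `γ = 1 + c + 1/c`. -/
def gamc (c : ℝ) : ℝ := 1 + c + 1 / c

/-- `p_σ = (μ + λ σ R₀ (τ'-τ))(σ + cS)`. -/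
def psig (c S σ R₀ τ τ' : ℝ) : ℝ := (muc c + lamc c * σ * R₀ * (τ' - τ)) * (σ + c * S)

/-- `q_σ = q (1 + δ σ R₀)`. -/
def qsig (c σ R₀ q : ℝ) : ℝ := q * (1 + delc c * σ * R₀)

/-- `max_i ‖N_i‖₁` for a solution: sup norms of the `N_i` over `Dom`, and of their
first-order partial derivatives over the interior of `Dom`. -/
def NNSol (Dom : Set (ℝ × ℝ × ℝ)) (N : Fin 4 → ℝ → ℝ → ℝ → ℝ) : ℝ :=
  NN4 Dom (interior Dom) N


set_option maxHeartbeats 1000000 in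
/-- Scalar comparison lemma, by a maximum principle with a vanishing weight. It uses only the
existence of the partial derivatives (no chain rule along characteristics). -/
lemma scalar_comparison (τ τ' a₁ b₁ a₂ b₂ vx vy lam A : ℝ)
    (hτ : τ < τ') (ha : a₁ < b₁) (hb : a₂ < b₂) (hlam : 0 < lam) (hA : 0 ≤ A)
    (X Y X' Y' : ℝ → ℝ) (hX : ∀ x, HasDerivAt X (X' x) x) (hY : ∀ y, HasDerivAt Y (Y' y) y)
    (hX0 : ∀ x ∈ Icc a₁ b₁, 0 ≤ X x) (hY0 : ∀ y ∈ Icc a₂ b₂, 0 ≤ Y y)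
    (hX1 : ∀ x ∈ Ioo a₁ b₁, 0 < X x) (hY1 : ∀ y ∈ Ioo a₂ b₂, 0 < Y y)
    (hX2 : ∀ x ∈ Ioo a₁ b₁, vx * X' x ≤ 0) (hY2 : ∀ y ∈ Ioo a₂ b₂, vy * Y' y ≤ 0)
    (w : ℝ → ℝ → ℝ → ℝ) (hw : Cont3 w (PsetT (Icc τ τ') a₁ b₁ a₂ b₂))
    (hp : ∀ t ∈ Ioo τ τ', ∀ x ∈ Ioo a₁ b₁, ∀ y ∈ Ioo a₂ b₂, HasPartials w (t, x, y))
    (hD : ∀ t ∈ Ioo τ τ', ∀ x ∈ Ioo a₁ b₁, ∀ y ∈ Ioo a₂ b₂,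
      |pdtF w t x y + vx * pdxF w t x y + vy * pdyF w t x y| ≤ lam * A * Real.exp (lam * t))
    (hbd : ∀ t ∈ Icc τ τ', ∀ x ∈ Icc a₁ b₁, ∀ y ∈ Icc a₂ b₂, w t x y ≠ 0 → X x ≠ 0 → Y y ≠ 0 →
      τ < t ∧ x ∈ Ioo a₁ b₁ ∧ y ∈ Ioo a₂ b₂) :
    ∀ p ∈ PsetT (Icc τ τ') a₁ b₁ a₂ b₂, |w p.1 p.2.1 p.2.2| ≤ A * Real.exp (lam * p.1) := by
  have hXc : Continuous X := continuous_iff_continuousAt.2 fun x => (hX x).continuousAt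
  have hYc : Continuous Y := continuous_iff_continuousAt.2 fun x => (hY x).continuousAt
  have hcomp : IsCompact (PsetT (Icc τ τ') a₁ b₁ a₂ b₂) :=
    isCompact_Icc.prod (isCompact_Icc.prod isCompact_Icc)
  have hne : (PsetT (Icc τ τ') a₁ b₁ a₂ b₂).Nonempty :=
    ⟨(τ, a₁, a₂), ⟨le_rfl, hτ.le⟩, ⟨le_rfl, ha.le⟩, ⟨le_rfl, hb.le⟩⟩
  unfold Cont3 at hw
  -- interior claim
  have hint : ∀ p ∈ Ioo τ τ' ×ˢ Ioo a₁ b₁ ×ˢ Ioo a₂ b₂,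
      |w p.1 p.2.1 p.2.2| ≤ A * Real.exp (lam * p.1) := by
    rintro ⟨t0, x0, y0⟩ ⟨ht0, hx0, hy0⟩
    simp only at ht0 hx0 hy0 ⊢
    by_contra hcon
    push Not at hcon
    set ψ : ℝ × ℝ × ℝ → ℝ := fun p => (τ' - p.1) * X p.2.1 * Y p.2.2 with hψ
    have hψc : Continuous ψ := by
      rw [hψ]; fun_prop
    obtain ⟨C, hC⟩ := hcomp.exists_bound_of_continuousOn hψc.continuousOn
    set u : ℝ × ℝ × ℝ → ℝ := fun p => w p.1 p.2.1 p.2.2 * Real.exp (-(lam * p.1)) with hu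
    have huc : ContinuousOn u (PsetT (Icc τ τ') a₁ b₁ a₂ b₂) := by
      refine hw.mul (Continuous.continuousOn ?_)
      fun_prop
    have hu0 : A < |u (t0, x0, y0)| := by
      simp only [hu, abs_mul, Real.abs_exp]
      rw [Real.exp_neg]
      rw [← div_eq_mul_inv, lt_div_iff₀ (Real.exp_pos _)]
      exact hcon
    have hmem0 : (t0, x0, y0) ∈ PsetT (Icc τ τ') a₁ b₁ a₂ b₂ :=
      ⟨Ioo_subset_Icc_self ht0, Ioo_subset_Icc_self hx0, Ioo_subset_Icc_self hy0⟩
    have hψ0 : 0 < ψ (t0, x0, y0) := by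
      have h1 := hX1 x0 hx0
      have h2 := hY1 y0 hy0
      have h3 : 0 < τ' - t0 := by linarith [ht0.2]
      simp only [hψ]; positivity
    have hC0 : 0 < C := by
      have := hC _ hmem0
      rw [Real.norm_eq_abs, abs_of_pos hψ0] at this
      linarith
    -- choose the exponent
    set B := |u (t0, x0, y0)| with hB
    have hB0 : 0 < B := lt_of_le_of_lt hA hu0
    obtain ⟨n, hn⟩ : ∃ n : ℕ, A ^ (2 * n + 2) * C < B ^ (2 * n + 2) * ψ (t0, x0, y0) := by
      have hr : A / B < 1 := (div_lt_one hB0).2 hu0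
      have hr0 : 0 ≤ A / B := by positivity
      obtain ⟨n, hn⟩ := exists_pow_lt_of_lt_one (div_pos hψ0 hC0) hr
      refine ⟨n, ?_⟩
      have h1 : (A / B) ^ (2 * n + 2) ≤ (A / B) ^ n :=
        pow_le_pow_of_le_one hr0 hr.le (by omega)
      have h2 := lt_of_le_of_lt h1 hn
      rw [div_pow, div_lt_div_iff₀ (by positivity) hC0] at h2
      linarith
    set F : ℝ × ℝ × ℝ → ℝ := fun p => u p ^ (2 * n + 2) * ψ p with hF
    have hFc : ContinuousOn F (PsetT (Icc τ τ') a₁ b₁ a₂ b₂) :=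
      (huc.pow _).mul hψc.continuousOn
    obtain ⟨⟨t, x, y⟩, hpm, hmax⟩ := hcomp.exists_isMaxOn hne hFc
    have heven : Even (2 * n + 2) := ⟨n + 1, by ring⟩
    have hFp : A ^ (2 * n + 2) * C < F (t, x, y) := by
      refine lt_of_lt_of_le ?_ (hmax hmem0)
      simp only [hF]
      rw [← heven.pow_abs (u (t0, x0, y0))]
      exact hn
    have hFpos : 0 < F (t, x, y) := lt_of_le_of_lt (by positivity) hFp
    have huA : A < |u (t, x, y)| := by
      by_contra h
      push Not at h
      have h1 : |u (t, x, y)| ^ (2 * n + 2) ≤ A ^ (2 * n + 2) :=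
        pow_le_pow_left₀ (abs_nonneg _) h _
      have h2 : ψ (t, x, y) ≤ C := (le_abs_self _).trans (hC _ hpm)
      have h3 : F (t, x, y) ≤ A ^ (2 * n + 2) * C := by
        simp only [hF]
        rw [← heven.pow_abs]
        calc |u (t, x, y)| ^ (2 * n + 2) * ψ (t, x, y) ≤ |u (t, x, y)| ^ (2 * n + 2) * C := by
              gcongr
          _ ≤ _ := by gcongr
      linarith
    have hune : u (t, x, y) ≠ 0 := by
      intro h; rw [h, abs_zero] at huA; linarith
    have hψne : ψ (t, x, y) ≠ 0 := by
      intro h; simp only [hF, h, mul_zero, lt_irrefl] at hFpos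
    have hwne : w t x y ≠ 0 := by
      intro h; apply hune; simp [hu, h]
    obtain ⟨htI, hxI, hyI⟩ := hpm
    simp only at htI hxI hyI
    have hne1 : τ' - t ≠ 0 := by intro h; apply hψne; simp [hψ, h]
    have hne2 : X x ≠ 0 := by intro h; apply hψne; simp [hψ, h]
    have hne3 : Y y ≠ 0 := by intro h; apply hψne; simp [hψ, h]
    obtain ⟨ht1, hxo, hyo⟩ := hbd t htI x hxI y hyI hwne hne2 hne3
    have hto : t ∈ Ioo τ τ' := ⟨ht1, lt_of_le_of_ne htI.2 (by intro h; apply hne1; linarith)⟩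
    obtain ⟨dt, dx, dy⟩ := hp t hto x hxo y hyo
    simp only at dt dx dy
    have ht := dt.hasDerivAt
    have hx := dx.hasDerivAt
    have hy := dy.hasDerivAt
    have hDp := hD t hto x hxo y hyo
    unfold pdtF pdxF pdyF at hDp
    set wt := deriv (fun s => w s x y) t
    set wx := deriv (fun s => w t s y) x
    set wy := deriv (fun s => w t x s) y
    set E := Real.exp (-(lam * t)) with hE
    have hEpos : 0 < E := Real.exp_pos _
    have hEd : HasDerivAt (fun s => Real.exp (-(lam * s))) (E * (-lam)) t := by
      have : HasDerivAt (fun s : ℝ => -(lam * s)) (-lam) t := by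
        simpa using ((hasDerivAt_id t).const_mul lam).fun_neg
      exact this.exp
    have lt' : IsLocalMax (fun s => F (s, x, y)) t := by
      filter_upwards [Icc_mem_nhds hto.1 hto.2] with s hs
      exact hmax (show (s, x, y) ∈ PsetT (Icc τ τ') a₁ b₁ a₂ b₂ from ⟨hs, hxI, hyI⟩)
    have lx' : IsLocalMax (fun s => F (t, s, y)) x := by
      filter_upwards [Icc_mem_nhds hxo.1 hxo.2] with s hs
      exact hmax (show (t, s, y) ∈ PsetT (Icc τ τ') a₁ b₁ a₂ b₂ from ⟨htI, hs, hyI⟩)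
    have ly' : IsLocalMax (fun s => F (t, x, s)) y := by
      filter_upwards [Icc_mem_nhds hyo.1 hyo.2] with s hs
      exact hmax (show (t, x, s) ∈ PsetT (Icc τ τ') a₁ b₁ a₂ b₂ from ⟨htI, hxI, hs⟩)
    have et := lt'.hasDerivAt_eq_zero
      (((ht.mul hEd).pow (2 * n + 2)).mul
        ((((hasDerivAt_id t).const_sub τ').mul_const (X x)).mul_const (Y y)))
    have ex := lx'.hasDerivAt_eq_zero
      (((hx.mul_const E).pow (2 * n + 2)).mul
        (((hX x).const_mul (τ' - t)).mul_const (Y y)))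
    have ey := ly'.hasDerivAt_eq_zero
      (((hy.mul_const E).pow (2 * n + 2)).mul
        ((hY y).const_mul ((τ' - t) * X x)))
    have hk : 2 * n + 2 - 1 = 2 * n + 1 := by omega
    simp only [Pi.mul_apply, Pi.pow_apply, id, hk] at et ex ey
    have hXp := hX1 x hxo
    have hYp := hY1 y hyo
    have hTp : 0 < τ' - t := by linarith [hto.2]
    have hX2' := hX2 x hxo
    have hY2' := hY2 y hyo
    have huval : u (t, x, y) = w t x y * E := rfl
    rw [huval] at huA hune
    rw [← hE] at et
    clear_value wt wx wy E
    set U := w t x y * E with hU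
    have hP : U ^ (2 * n + 1) ≠ 0 := pow_ne_zero _ hune
    set k : ℝ := ((2 * n + 2 : ℕ) : ℝ) with hkk
    have hkpos : 0 < k := by rw [hkk]; positivity
    have et2 : k * (wt * E - lam * U) * ((τ' - t) * X x * Y y) - U * (X x * Y y) = 0 := by
      apply mul_left_cancel₀ hP
      rw [mul_zero, ← et, hU]; ring
    have ex2 : k * (wx * E) * ((τ' - t) * X x * Y y) + U * ((τ' - t) * X' x * Y y) = 0 := by
      apply mul_left_cancel₀ hP
      rw [mul_zero, ← ex]; ring
    have ey2 : k * (wy * E) * ((τ' - t) * X x * Y y) + U * ((τ' - t) * X x * Y' y) = 0 := by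
      apply mul_left_cancel₀ hP
      rw [mul_zero, ← ey]; ring
    have hsum : (k * ((τ' - t) * X x * Y y)) * (U * ((wt + vx * wx + vy * wy) * E) - lam * U ^ 2)
        = U ^ 2 * (X x * Y y + (τ' - t) * Y y * (-(vx * X' x)) + (τ' - t) * X x * (-(vy * Y' y))) := by
      linear_combination U * et2 + U * vx * ex2 + U * vy * ey2
    have hnn : 0 ≤ U ^ 2 * (X x * Y y + (τ' - t) * Y y * (-(vx * X' x))
        + (τ' - t) * X x * (-(vy * Y' y))) := by
      have h1 : 0 ≤ -(vx * X' x) := by linarith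
      have h2 : 0 ≤ -(vy * Y' y) := by linarith
      positivity
    rw [← hsum] at hnn
    have hfin : 0 ≤ U * ((wt + vx * wx + vy * wy) * E) - lam * U ^ 2 :=
      nonneg_of_mul_nonneg_right hnn (by positivity)
    have hDE : |(wt + vx * wx + vy * wy) * E| ≤ lam * A := by
      rw [abs_mul, abs_of_pos hEpos]
      calc _ ≤ lam * A * Real.exp (lam * t) * E := by gcongr
        _ = lam * A := by rw [hE, mul_assoc, ← Real.exp_add]; simp
    have h1 : U * ((wt + vx * wx + vy * wy) * E) ≤ |U| * (lam * A) := by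
      refine (le_abs_self _).trans ?_
      rw [abs_mul]; gcongr
    have h2 : lam * |U| ^ 2 ≤ lam * (|U| * A) := by
      rw [sq_abs]; linarith
    have h3 : 0 < |U| := abs_pos.2 hune
    have h4 := le_of_mul_le_mul_left h2 hlam
    rw [sq] at h4
    exact absurd (le_of_mul_le_mul_left h4 h3) (not_le.2 huA)
  -- closure
  have hcl : closure (Ioo τ τ' ×ˢ Ioo a₁ b₁ ×ˢ Ioo a₂ b₂) = PsetT (Icc τ τ') a₁ b₁ a₂ b₂ := by
    rw [closure_prod_eq, closure_prod_eq, closure_Ioo hτ.ne, closure_Ioo ha.ne, closure_Ioo hb.ne]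
    rfl
  intro p hpp
  rw [← hcl] at hpp hw
  refine le_on_closure (f := fun p : ℝ × ℝ × ℝ => |w p.1 p.2.1 p.2.2|)
    (g := fun p => A * Real.exp (lam * p.1)) hint hw.abs (Continuous.continuousOn ?_) hpp
  fun_prop

lemma interior_PsetT (τ τ' a₁ b₁ a₂ b₂ : ℝ) :
    interior (PsetT (Icc τ τ') a₁ b₁ a₂ b₂) = Ioo τ τ' ×ˢ Ioo a₁ b₁ ×ˢ Ioo a₂ b₂ := by
  unfold PsetT
  rw [interior_prod_eq, interior_prod_eq, interior_Icc, interior_Icc, interior_Icc]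

lemma prod_diff_bound {a b a' b' L d : ℝ} (hb : |b| ≤ L) (ha' : |a'| ≤ L)
    (h1 : |a - a'| ≤ d) (h2 : |b - b'| ≤ d) : |a * b - a' * b'| ≤ 2 * L * d := by
  have hd : 0 ≤ d := (abs_nonneg _).trans h1
  have hL : 0 ≤ L := (abs_nonneg _).trans hb
  have : a * b - a' * b' = (a - a') * b + a' * (b - b') := by ring
  rw [this]
  refine (abs_add_le _ _).trans ?_
  rw [abs_mul, abs_mul]
  have e1 : |a - a'| * |b| ≤ d * L := by gcongr
  have e2 : |a'| * |b - b'| ≤ L * d := by gcongr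
  linarith

/-- Uniqueness of classical solutions to the problem `Σ_(τ,τ')`. -/
theorem broadwell_uniqueness_bounded
    (c S τ τ' a₁ b₁ a₂ b₂ : ℝ) (hc : 0 < c) (hS : 0 < S)
    (hτ : τ < τ') (ha : a₁ < b₁) (hb : a₂ < b₂)
    (N0 : Fin 4 → ℝ → ℝ → ℝ) (B1 B2 B3 B4 : ℝ → ℝ → ℝ)
    (hdata : NiceData (Icc τ τ') τ a₁ b₁ a₂ b₂ N0 B1 B2 B3 B4)
    (M N : Fin 4 → ℝ → ℝ → ℝ → ℝ)
    (hM : IsSol c S (Icc τ τ') τ a₁ b₁ a₂ b₂ N0 B1 B2 B3 B4 M)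
    (hN : IsSol c S (Icc τ τ') τ a₁ b₁ a₂ b₂ N0 B1 B2 B3 B4 N) :
    ∀ i : Fin 4, ∀ p ∈ PsetT (Icc τ τ') a₁ b₁ a₂ b₂, M i p.1 p.2.1 p.2.2 = N i p.1 p.2.1 p.2.2 := by
  classical
  obtain ⟨hMc, hMp, hMe, hMi, hM1, hM2, hM3, hM4⟩ := hM
  obtain ⟨hNc, hNp, hNe, hNi, hN1, hN2, hN3, hN4⟩ := hN
  rw [interior_PsetT] at hMp hMe hNp hNe
  have hcomp : IsCompact (PsetT (Icc τ τ') a₁ b₁ a₂ b₂) :=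
    isCompact_Icc.prod (isCompact_Icc.prod isCompact_Icc)
  have hbM : ∀ i, ∃ C, ∀ p ∈ PsetT (Icc τ τ') a₁ b₁ a₂ b₂, ‖M i p.1 p.2.1 p.2.2‖ ≤ C :=
    fun i => hcomp.exists_bound_of_continuousOn (hMc i)
  have hbN : ∀ i, ∃ C, ∀ p ∈ PsetT (Icc τ τ') a₁ b₁ a₂ b₂, ‖N i p.1 p.2.1 p.2.2‖ ≤ C :=
    fun i => hcomp.exists_bound_of_continuousOn (hNc i)
  choose CM hCM using hbM
  choose CN hCN using hbN
  set L : ℝ := 1 + ∑ i, (|CM i| + |CN i|) with hL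
  have hsum : ∀ i, |CM i| + |CN i| ≤ ∑ i, (|CM i| + |CN i|) := fun i =>
    Finset.single_le_sum (f := fun i => |CM i| + |CN i|) (fun i _ => by positivity)
      (Finset.mem_univ i)
  have hL1 : 0 < L := by
    have := hsum 0
    have : 0 ≤ |CM 0| + |CN 0| := by positivity
    linarith
  have hLM : ∀ i, ∀ p ∈ PsetT (Icc τ τ') a₁ b₁ a₂ b₂, |M i p.1 p.2.1 p.2.2| ≤ L := by
    intro i p hp
    have h1 := hCM i p hp
    rw [Real.norm_eq_abs] at h1
    linarith [hsum i, le_abs_self (CM i), abs_nonneg (CN i)]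
  have hLN : ∀ i, ∀ p ∈ PsetT (Icc τ τ') a₁ b₁ a₂ b₂, |N i p.1 p.2.1 p.2.2| ≤ L := by
    intro i p hp
    have h1 := hCN i p hp
    rw [Real.norm_eq_abs] at h1
    linarith [hsum i, le_abs_self (CN i), abs_nonneg (CM i)]
  set lam : ℝ := 16 * c * S * L with hlam
  have hlam0 : 0 < lam := by positivity
  set w : Fin 4 → ℝ → ℝ → ℝ → ℝ := fun i t x y => M i t x y - N i t x y with hw
  have hwc : ∀ i, Cont3 (w i) (PsetT (Icc τ τ') a₁ b₁ a₂ b₂) := fun i => (hMc i).sub (hNc i)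
  have hwp : ∀ i, ∀ t ∈ Ioo τ τ', ∀ x ∈ Ioo a₁ b₁, ∀ y ∈ Ioo a₂ b₂,
      HasPartials (w i) (t, x, y) := by
    intro i t ht x hx y hy
    obtain ⟨m1, m2, m3⟩ := hMp i (t, x, y) ⟨ht, hx, hy⟩
    obtain ⟨n1, n2, n3⟩ := hNp i (t, x, y) ⟨ht, hx, hy⟩
    exact ⟨m1.sub n1, m2.sub n2, m3.sub n3⟩
  have hwe : ∀ i, ∀ t ∈ Ioo τ τ', ∀ x ∈ Ioo a₁ b₁, ∀ y ∈ Ioo a₂ b₂,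
      pdtF (w i) t x y + spX c i * pdxF (w i) t x y + spY c i * pdyF (w i) t x y
        = sgn4 i * (QQ c S M t x y - QQ c S N t x y) := by
    intro i t ht x hx y hy
    obtain ⟨m1, m2, m3⟩ := hMp i (t, x, y) ⟨ht, hx, hy⟩
    obtain ⟨n1, n2, n3⟩ := hNp i (t, x, y) ⟨ht, hx, hy⟩
    have e1 := hMe i (t, x, y) ⟨ht, hx, hy⟩
    have e2 := hNe i (t, x, y) ⟨ht, hx, hy⟩
    have d1 : pdtF (w i) t x y = pdtF (M i) t x y - pdtF (N i) t x y := deriv_fun_sub m1 n1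
    have d2 : pdxF (w i) t x y = pdxF (M i) t x y - pdxF (N i) t x y := deriv_fun_sub m2 n2
    have d3 : pdyF (w i) t x y = pdyF (M i) t x y - pdyF (N i) t x y := deriv_fun_sub m3 n3
    simp only at e1 e2
    rw [d1, d2, d3]
    linear_combination e1 - e2
  have hw0 : ∀ i, ∀ x ∈ Icc a₁ b₁, ∀ y ∈ Icc a₂ b₂, w i τ x y = 0 := by
    intro i x hx y hy
    simp only [hw, hMi i x hx y hy, hNi i x hx y hy, sub_self]
  -- one step of the iteration
  have step : ∀ m : ℝ, 0 ≤ m →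
      (∀ i, ∀ p ∈ PsetT (Icc τ τ') a₁ b₁ a₂ b₂,
        |w i p.1 p.2.1 p.2.2| ≤ m * Real.exp (lam * p.1)) →
      ∀ i, ∀ p ∈ PsetT (Icc τ τ') a₁ b₁ a₂ b₂,
        |w i p.1 p.2.1 p.2.2| ≤ (m / 2) * Real.exp (lam * p.1) := by
    intro m hm hall
    have hD : ∀ i, ∀ t ∈ Ioo τ τ', ∀ x ∈ Ioo a₁ b₁, ∀ y ∈ Ioo a₂ b₂,
        |pdtF (w i) t x y + spX c i * pdxF (w i) t x y + spY c i * pdyF (w i) t x y|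
          ≤ lam * (m / 2) * Real.exp (lam * t) := by
      intro i t ht x hx y hy
      have hmem : (t, x, y) ∈ PsetT (Icc τ τ') a₁ b₁ a₂ b₂ :=
        ⟨Ioo_subset_Icc_self ht, Ioo_subset_Icc_self hx, Ioo_subset_Icc_self hy⟩
      rw [hwe i t ht x hx y hy, abs_mul]
      have hs : |sgn4 i| = 1 := by fin_cases i <;> simp [sgn4]
      rw [hs, one_mul]
      have q1 := prod_diff_bound (hLM 2 _ hmem) (hLN 1 _ hmem) (hall 1 _ hmem) (hall 2 _ hmem)
      have q2 := prod_diff_bound (hLM 3 _ hmem) (hLN 0 _ hmem) (hall 0 _ hmem) (hall 3 _ hmem)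
      simp only at q1 q2
      have : QQ c S M t x y - QQ c S N t x y = (2 * c * S) *
          ((M 1 t x y * M 2 t x y - N 1 t x y * N 2 t x y)
            - (M 0 t x y * M 3 t x y - N 0 t x y * N 3 t x y)) := by
        unfold QQ; ring
      rw [this, abs_mul, abs_of_pos (by positivity : 0 < 2 * c * S)]
      calc _ ≤ (2 * c * S) * (2 * L * (m * Real.exp (lam * t)) + 2 * L * (m * Real.exp (lam * t))) := by
            gcongr
            exact (abs_sub _ _).trans (add_le_add q1 q2)
        _ = lam * (m / 2) * Real.exp (lam * t) := by
            rw [show lam * (m / 2) = 8 * c * S * L * m by rw [hlam]; ring]; ring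
    have dR : ∀ b x : ℝ, HasDerivAt (fun s => b - s) (-1) x := fun b x => by
      simpa using (hasDerivAt_id x).const_sub b
    have dL : ∀ a x : ℝ, HasDerivAt (fun s => s - a) 1 x := fun a x => by
      simpa using (hasDerivAt_id x).sub_const a
    have dB : ∀ a b x : ℝ, HasDerivAt (fun s => (s - a) * (b - s)) (1 * (b - x) + (x - a) * (-1)) x :=
      fun a b x => (dL a x).mul (dR b x)
    have pR : ∀ a b : ℝ, ∀ x ∈ Icc a b, 0 ≤ b - x := fun a b x hx => by linarith [hx.2]
    have pL : ∀ a b : ℝ, ∀ x ∈ Icc a b, 0 ≤ x - a := fun a b x hx => by linarith [hx.1]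
    have pB : ∀ a b : ℝ, ∀ x ∈ Icc a b, 0 ≤ (x - a) * (b - x) := fun a b x hx =>
      mul_nonneg (pL a b x hx) (pR a b x hx)
    have sR : ∀ a b : ℝ, ∀ x ∈ Ioo a b, 0 < b - x := fun a b x hx => by linarith [hx.2]
    have sL : ∀ a b : ℝ, ∀ x ∈ Ioo a b, 0 < x - a := fun a b x hx => by linarith [hx.1]
    have sB : ∀ a b : ℝ, ∀ x ∈ Ioo a b, 0 < (x - a) * (b - x) := fun a b x hx =>
      mul_pos (sL a b x hx) (sR a b x hx)
    have iB : ∀ a b x : ℝ, x ∈ Icc a b → (x - a) * (b - x) ≠ 0 → x ∈ Ioo a b := by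
      intro a b x hx h
      refine ⟨lt_of_le_of_ne hx.1 ?_, lt_of_le_of_ne hx.2 ?_⟩
      · rintro rfl; simp at h
      · rintro rfl; simp at h
    have it : ∀ i, ∀ t ∈ Icc τ τ', ∀ x ∈ Icc a₁ b₁, ∀ y ∈ Icc a₂ b₂, w i t x y ≠ 0 → τ < t := by
      intro i t ht x hx y hy h
      refine lt_of_le_of_ne ht.1 ?_
      rintro rfl
      exact h (hw0 i x hx y hy)
    have hm2 : 0 ≤ m / 2 := by positivity
    have key := fun i X Y X' Y' hX hY hX0 hY0 hX1 hY1 hX2 hY2 hbd =>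
      scalar_comparison τ τ' a₁ b₁ a₂ b₂ (spX c i) (spY c i) lam (m / 2) hτ ha hb hlam0 hm2
        X Y X' Y' hX hY hX0 hY0 hX1 hY1 hX2 hY2 (w i) (hwc i) (hwp i) (hD i) hbd
    intro i
    fin_cases i
    · refine key 0 _ _ _ _ (dR b₁) (dB a₂ b₂) (pR a₁ b₁) (pB a₂ b₂) (sR a₁ b₁) (sB a₂ b₂)
        (fun x hx => by simp [spX]; linarith) (fun y hy => by simp [spY]) ?_
      intro t ht x hx y hy h hX hY
      refine ⟨it 0 t ht x hx y hy h, ⟨lt_of_le_of_ne hx.1 ?_, lt_of_le_of_ne hx.2 ?_⟩,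
        iB _ _ _ hy hY⟩
      · rintro rfl; exact h (by simp only [hw, hM1 t ht y hy, hN1 t ht y hy, sub_self])
      · rintro rfl; simp at hX
    · refine key 1 _ _ _ _ (dB a₁ b₁) (dR b₂) (pB a₁ b₁) (pR a₂ b₂) (sB a₁ b₁) (sR a₂ b₂)
        (fun x hx => by simp [spX]) (fun y hy => by simp [spY]; linarith) ?_
      intro t ht x hx y hy h hX hY
      refine ⟨it 1 t ht x hx y hy h, iB _ _ _ hx hX,
        ⟨lt_of_le_of_ne hy.1 ?_, lt_of_le_of_ne hy.2 ?_⟩⟩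
      · rintro rfl; exact h (by simp only [hw, hM2 t ht x hx, hN2 t ht x hx, sub_self])
      · rintro rfl; simp at hY
    · refine key 2 _ _ _ _ (dB a₁ b₁) (dL a₂) (pB a₁ b₁) (pL a₂ b₂) (sB a₁ b₁) (sL a₂ b₂)
        (fun x hx => by simp [spX]) (fun y hy => by simp [spY]; linarith) ?_
      intro t ht x hx y hy h hX hY
      refine ⟨it 2 t ht x hx y hy h, iB _ _ _ hx hX,
        ⟨lt_of_le_of_ne hy.1 ?_, lt_of_le_of_ne hy.2 ?_⟩⟩
      · rintro rfl; simp at hY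
      · rintro rfl; exact h (by simp only [hw, hM3 t ht x hx, hN3 t ht x hx, sub_self])
    · refine key 3 _ _ _ _ (dL a₁) (dB a₂ b₂) (pL a₁ b₁) (pB a₂ b₂) (sL a₁ b₁) (sB a₂ b₂)
        (fun x hx => by simp [spX]; linarith) (fun y hy => by simp [spY]) ?_
      intro t ht x hx y hy h hX hY
      refine ⟨it 3 t ht x hx y hy h, ⟨lt_of_le_of_ne hx.1 ?_, lt_of_le_of_ne hx.2 ?_⟩,
        iB _ _ _ hy hY⟩
      · rintro rfl; simp at hX
      · rintro rfl; exact h (by simp only [hw, hM4 t ht y hy, hN4 t ht y hy, sub_self])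
  set m0 : ℝ := 2 * L * Real.exp (-(lam * τ)) with hm0
  have hm00 : 0 ≤ m0 := by positivity
  have iter : ∀ k : ℕ, ∀ i, ∀ p ∈ PsetT (Icc τ τ') a₁ b₁ a₂ b₂,
      |w i p.1 p.2.1 p.2.2| ≤ (m0 * (1 / 2) ^ k) * Real.exp (lam * p.1) := by
    intro k
    induction k with
    | zero =>
      intro i p hp
      have h1 : |w i p.1 p.2.1 p.2.2| ≤ 2 * L := by
        refine (abs_sub _ _).trans ?_
        linarith [hLM i p hp, hLN i p hp]
      have h2 : 1 ≤ Real.exp (-(lam * τ)) * Real.exp (lam * p.1) := by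
        rw [← Real.exp_add]
        apply Real.one_le_exp
        have : τ ≤ p.1 := hp.1.1
        nlinarith
      calc _ ≤ 2 * L * 1 := by linarith
        _ ≤ 2 * L * (Real.exp (-(lam * τ)) * Real.exp (lam * p.1)) := by gcongr
        _ = _ := by rw [hm0]; ring
    | succ k ih =>
      intro i p hp
      have := step (m0 * (1 / 2) ^ k) (by positivity) ih i p hp
      rw [pow_succ]
      convert this using 1
      ring
  intro i p hp
  have hlim : Filter.Tendsto (fun k : ℕ => (m0 * (1 / 2 : ℝ) ^ k) * Real.exp (lam * p.1))
      Filter.atTop (nhds ((m0 * 0) * Real.exp (lam * p.1))) :=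
    ((tendsto_pow_atTop_nhds_zero_of_lt_one (by norm_num) (by norm_num)).const_mul m0).mul_const _
  have h0 := ge_of_tendsto' hlim (fun k => iter k i p hp)
  rw [mul_zero, zero_mul] at h0
  have h1 : w i p.1 p.2.1 p.2.2 = 0 := abs_eq_zero.1 (le_antisymm h0 (abs_nonneg _))
  exact sub_eq_zero.1 h1
end
end

section
/- Let M and N be two classical solutions of the initial-boundary value problem Σ on the unbounded time interval, i.e. 4-tuples of real functions that are continuous on [0,∞)×[a₁,b₁]×[a₂,b₂], possess all first-order partial derivatives on the interior, and satisfy the Broadwell system together with the initial and boundary conditions. Then M = N. -/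
open Set MeasureTheory

noncomputable section

/-- Weighted maximum principle along a constant direction `(1, α, β)`. -/
lemma max_lemma (T a₁ b₁ a₂ b₂ α β : ℝ) (z s zt zx zy st sx sy : ℝ → ℝ → ℝ → ℝ)
    (hz : ContinuousOn (fun p : ℝ × ℝ × ℝ => z p.1 p.2.1 p.2.2)
      (Icc 0 T ×ˢ Icc a₁ b₁ ×ˢ Icc a₂ b₂))
    (hs : Continuous (fun p : ℝ × ℝ × ℝ => s p.1 p.2.1 p.2.2))
    (hs0 : ∀ t ∈ Icc 0 T, ∀ x ∈ Icc a₁ b₁, ∀ y ∈ Icc a₂ b₂, 0 ≤ s t x y)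
    (hs1 : ∀ t ∈ Ioo 0 T, ∀ x ∈ Ioo a₁ b₁, ∀ y ∈ Ioo a₂ b₂, 0 < s t x y)
    (hbd : ∀ t ∈ Icc 0 T, ∀ x ∈ Icc a₁ b₁, ∀ y ∈ Icc a₂ b₂, 0 < z t x y → 0 < s t x y →
      t ∈ Ioo 0 T ∧ x ∈ Ioo a₁ b₁ ∧ y ∈ Ioo a₂ b₂)
    (hzt : ∀ t ∈ Ioo 0 T, ∀ x ∈ Ioo a₁ b₁, ∀ y ∈ Ioo a₂ b₂,
      HasDerivAt (fun u => z u x y) (zt t x y) t)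
    (hzx : ∀ t ∈ Ioo 0 T, ∀ x ∈ Ioo a₁ b₁, ∀ y ∈ Ioo a₂ b₂,
      HasDerivAt (fun u => z t u y) (zx t x y) x)
    (hzy : ∀ t ∈ Ioo 0 T, ∀ x ∈ Ioo a₁ b₁, ∀ y ∈ Ioo a₂ b₂,
      HasDerivAt (fun u => z t x u) (zy t x y) y)
    (hst : ∀ t x y, HasDerivAt (fun u => s u x y) (st t x y) t)
    (hsx : ∀ t x y, HasDerivAt (fun u => s t u y) (sx t x y) x)
    (hsy : ∀ t x y, HasDerivAt (fun u => s t x u) (sy t x y) y)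
    (hD : ∀ t ∈ Ioo 0 T, ∀ x ∈ Ioo a₁ b₁, ∀ y ∈ Ioo a₂ b₂,
      st t x y + α * sx t x y + β * sy t x y ≤ 0)
    (t₀ x₀ y₀ : ℝ) (ht₀ : t₀ ∈ Ioo 0 T) (hx₀ : x₀ ∈ Ioo a₁ b₁) (hy₀ : y₀ ∈ Ioo a₂ b₂)
    (hq : 0 < z t₀ x₀ y₀) :
    ∃ t ∈ Ioo 0 T, ∃ x ∈ Ioo a₁ b₁, ∃ y ∈ Ioo a₂ b₂,
      z t₀ x₀ y₀ / 2 ≤ z t x y ∧ 0 ≤ zt t x y + α * zx t x y + β * zy t x y := by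
  obtain ⟨e, he⟩ : ∃ e, e = s t₀ x₀ y₀ := ⟨_, rfl⟩
  have hepos : 0 < e := he ▸ hs1 _ ht₀ _ hx₀ _ hy₀
  have hK : IsCompact (Icc 0 T ×ˢ Icc a₁ b₁ ×ˢ Icc a₂ b₂) :=
    isCompact_Icc.prod (isCompact_Icc.prod isCompact_Icc)
  have hsub : Ioo 0 T ×ˢ Ioo a₁ b₁ ×ˢ Ioo a₂ b₂ ⊆ Icc 0 T ×ˢ Icc a₁ b₁ ×ˢ Icc a₂ b₂ :=
    prod_mono Ioo_subset_Icc_self (prod_mono Ioo_subset_Icc_self Ioo_subset_Icc_self)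
  have hq0 : (t₀, x₀, y₀) ∈ Icc 0 T ×ˢ Icc a₁ b₁ ×ˢ Icc a₂ b₂ := hsub ⟨ht₀, hx₀, hy₀⟩
  have hcont : ContinuousOn (fun p : ℝ × ℝ × ℝ =>
      z p.1 p.2.1 p.2.2 * (s p.1 p.2.1 p.2.2 / (s p.1 p.2.1 p.2.2 + e)))
      (Icc 0 T ×ˢ Icc a₁ b₁ ×ˢ Icc a₂ b₂) := by
    refine hz.mul (hs.continuousOn.div (hs.continuousOn.add continuousOn_const) ?_)
    rintro ⟨t, x, y⟩ ⟨h1, h2, h3⟩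
    have := hs0 t h1 x h2 y h3
    simp only
    positivity
  obtain ⟨⟨t, x, y⟩, ⟨h1, h2, h3⟩, hmax⟩ := hK.exists_isMaxOn ⟨_, hq0⟩ hcont
  simp only at h1 h2 h3
  have hle : z t₀ x₀ y₀ / 2 ≤ z t x y * (s t x y / (s t x y + e)) := by
    have := hmax hq0
    simp only [mem_ofPred_eq] at this
    refine le_trans (le_of_eq ?_) this
    rw [← he]; field_simp; ring
  have hsn := hs0 t h1 x h2 y h3
  have hψ1 : s t x y / (s t x y + e) ≤ 1 := by
    rw [div_le_one (by positivity)]; linarith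
  have hψ0 : 0 ≤ s t x y / (s t x y + e) := by positivity
  have hzpos : 0 < z t x y := by
    by_contra h
    push Not at h
    nlinarith
  have hspos : 0 < s t x y := by
    rcases hsn.lt_or_eq with h | h
    · exact h
    · rw [← h] at hle; simp at hle; linarith
  obtain ⟨i1, i2, i3⟩ := hbd t h1 x h2 y h3 hzpos hspos
  have hse : s t x y + e ≠ 0 := by positivity
  have key : ∀ (f g : ℝ → ℝ) (f' g' w : ℝ), HasDerivAt f f' w → HasDerivAt g g' w →
      f w = z t x y → g w = s t x y →
      IsLocalMax (fun u => f u * (g u / (g u + e))) w →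
      f' * (s t x y * (s t x y + e)) = - (z t x y * e) * g' := by
    intro f g f' g' w hf hg hfw hgw hm
    have hne : g w + e ≠ 0 := by rw [hgw]; exact hse
    have hd := hm.hasDerivAt_eq_zero (hf.mul (hg.div (hg.add_const e) hne))
    try simp only [Pi.div_apply] at hd
    rw [hfw, hgw] at hd
    field_simp at hd
    linarith
  have nt : Ioo 0 T ∈ nhds t := Ioo_mem_nhds i1.1 i1.2
  have nx : Ioo a₁ b₁ ∈ nhds x := Ioo_mem_nhds i2.1 i2.2
  have ny : Ioo a₂ b₂ ∈ nhds y := Ioo_mem_nhds i3.1 i3.2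
  have kt := key (fun u => z u x y) (fun u => s u x y) _ _ t (hzt t i1 x i2 y i3) (hst t x y)
    rfl rfl (by
      filter_upwards [nt] with u hu
      exact hmax (show (u, x, y) ∈ _ from ⟨Ioo_subset_Icc_self hu, h2, h3⟩))
  have kx := key (fun u => z t u y) (fun u => s t u y) _ _ x (hzx t i1 x i2 y i3) (hsx t x y)
    rfl rfl (by
      filter_upwards [nx] with u hu
      exact hmax (show (t, u, y) ∈ _ from ⟨h1, Ioo_subset_Icc_self hu, h3⟩))
  have ky := key (fun u => z t x u) (fun u => s t x u) _ _ y (hzy t i1 x i2 y i3) (hsy t x y)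
    rfl rfl (by
      filter_upwards [ny] with u hu
      exact hmax (show (t, x, u) ∈ _ from ⟨h1, h2, Ioo_subset_Icc_self hu⟩))
  refine ⟨t, i1, x, i2, y, i3, by nlinarith, ?_⟩
  have hP : 0 < s t x y * (s t x y + e) := by positivity
  have hE : 0 < z t x y * e := by positivity
  have hD' := hD t i1 x i2 y i3
  have : 0 ≤ (zt t x y + α * zx t x y + β * zy t x y) * (s t x y * (s t x y + e)) := by
    have : (zt t x y + α * zx t x y + β * zy t x y) * (s t x y * (s t x y + e)) =
      (z t x y * e) * (-(st t x y + α * sx t x y + β * sy t x y)) := by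
      linear_combination kt + α * kx + β * ky
    rw [this]
    exact mul_nonneg hE.le (by linarith)
  exact nonneg_of_mul_nonneg_left this hP

/-- The weights, as products `(T - t) * f(x) * g(y)`. -/
lemma max_lemma_prod (T a₁ b₁ a₂ b₂ α β : ℝ) (z zt zx zy : ℝ → ℝ → ℝ → ℝ)
    (f g f' g' : ℝ → ℝ)
    (hz : ContinuousOn (fun p : ℝ × ℝ × ℝ => z p.1 p.2.1 p.2.2)
      (Icc 0 T ×ˢ Icc a₁ b₁ ×ˢ Icc a₂ b₂))
    (hf : ∀ x, HasDerivAt f (f' x) x) (hg : ∀ x, HasDerivAt g (g' x) x)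
    (hf0 : ∀ x ∈ Icc a₁ b₁, 0 ≤ f x) (hg0 : ∀ x ∈ Icc a₂ b₂, 0 ≤ g x)
    (hf1 : ∀ x ∈ Ioo a₁ b₁, 0 < f x) (hg1 : ∀ x ∈ Ioo a₂ b₂, 0 < g x)
    (hfD : ∀ x ∈ Ioo a₁ b₁, α * f' x ≤ 0) (hgD : ∀ x ∈ Ioo a₂ b₂, β * g' x ≤ 0)
    (hb0 : ∀ x ∈ Icc a₁ b₁, ∀ y ∈ Icc a₂ b₂, z 0 x y ≤ 0)
    (hb1 : f a₁ = 0 ∨ ∀ t ∈ Icc 0 T, ∀ y ∈ Icc a₂ b₂, z t a₁ y ≤ 0)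
    (hb2 : f b₁ = 0 ∨ ∀ t ∈ Icc 0 T, ∀ y ∈ Icc a₂ b₂, z t b₁ y ≤ 0)
    (hb3 : g a₂ = 0 ∨ ∀ t ∈ Icc 0 T, ∀ x ∈ Icc a₁ b₁, z t x a₂ ≤ 0)
    (hb4 : g b₂ = 0 ∨ ∀ t ∈ Icc 0 T, ∀ x ∈ Icc a₁ b₁, z t x b₂ ≤ 0)
    (hzt : ∀ t ∈ Ioo 0 T, ∀ x ∈ Ioo a₁ b₁, ∀ y ∈ Ioo a₂ b₂,
      HasDerivAt (fun u => z u x y) (zt t x y) t)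
    (hzx : ∀ t ∈ Ioo 0 T, ∀ x ∈ Ioo a₁ b₁, ∀ y ∈ Ioo a₂ b₂,
      HasDerivAt (fun u => z t u y) (zx t x y) x)
    (hzy : ∀ t ∈ Ioo 0 T, ∀ x ∈ Ioo a₁ b₁, ∀ y ∈ Ioo a₂ b₂,
      HasDerivAt (fun u => z t x u) (zy t x y) y)
    (t₀ x₀ y₀ : ℝ) (ht₀ : t₀ ∈ Ioo 0 T) (hx₀ : x₀ ∈ Ioo a₁ b₁) (hy₀ : y₀ ∈ Ioo a₂ b₂)
    (hq : 0 < z t₀ x₀ y₀) :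
    ∃ t ∈ Ioo 0 T, ∃ x ∈ Ioo a₁ b₁, ∃ y ∈ Ioo a₂ b₂,
      z t₀ x₀ y₀ / 2 ≤ z t x y ∧ 0 ≤ zt t x y + α * zx t x y + β * zy t x y := by
  have hfc : Continuous f := continuous_iff_continuousAt.2 fun x => (hf x).continuousAt
  have hgc : Continuous g := continuous_iff_continuousAt.2 fun x => (hg x).continuousAt
  refine max_lemma T a₁ b₁ a₂ b₂ α β z (fun t x y => (T - t) * f x * g y) zt zx zy
    (fun t x y => - (f x * g y)) (fun t x y => (T - t) * f' x * g y)
    (fun t x y => (T - t) * f x * g' y) hz (by fun_prop) ?_ ?_ ?_ hzt hzx hzy ?_ ?_ ?_ ?_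
    t₀ x₀ y₀ ht₀ hx₀ hy₀ hq
  · intro t ht x hx y hy
    exact mul_nonneg (mul_nonneg (by linarith [ht.2]) (hf0 x hx)) (hg0 y hy)
  · intro t ht x hx y hy
    exact mul_pos (mul_pos (by linarith [ht.2]) (hf1 x hx)) (hg1 y hy)
  · intro t ht x hx y hy hzp hsp
    have e1 : t ≠ 0 := by rintro rfl; linarith [hb0 x hx y hy]
    have e2 : t ≠ T := by rintro rfl; simp at hsp
    have e3 : x ≠ a₁ := by
      rintro rfl
      rcases hb1 with h | h
      · simp [h] at hsp
      · linarith [h t ht y hy]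
    have e4 : x ≠ b₁ := by
      rintro rfl
      rcases hb2 with h | h
      · simp [h] at hsp
      · linarith [h t ht y hy]
    have e5 : y ≠ a₂ := by
      rintro rfl
      rcases hb3 with h | h
      · simp [h] at hsp
      · linarith [h t ht x hx]
    have e6 : y ≠ b₂ := by
      rintro rfl
      rcases hb4 with h | h
      · simp [h] at hsp
      · linarith [h t ht x hx]
    exact ⟨⟨lt_of_le_of_ne ht.1 e1.symm, lt_of_le_of_ne ht.2 e2⟩,
      ⟨lt_of_le_of_ne hx.1 e3.symm, lt_of_le_of_ne hx.2 e4⟩,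
      ⟨lt_of_le_of_ne hy.1 e5.symm, lt_of_le_of_ne hy.2 e6⟩⟩
  · intro t x y
    have := (((hasDerivAt_id t).const_sub T).mul_const (f x)).mul_const (g y)
    simpa using this
  · intro t x y
    exact ((hf x).const_mul (T - t)).mul_const (g y)
  · intro t x y
    exact (hg y).const_mul ((T - t) * f x)
  · intro t ht x hx y hy
    have A := hf1 x hx
    have B := hg1 y hy
    have C : 0 < T - t := by linarith [ht.2]
    have D := hfD x hx
    have E := hgD y hy
    have h1 : 0 ≤ (T - t) * g y * (-(α * f' x)) := mul_nonneg (by positivity) (by linarith)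
    have h2 : 0 ≤ (T - t) * f x * (-(β * g' y)) := mul_nonneg (by positivity) (by linarith)
    have h3 : 0 ≤ f x * g y := by positivity
    linarith

/-- Quadratic estimate of the collision difference. -/
lemma q_est (k R d : ℝ) (hk : 0 ≤ k) (m0 m1 m2 m3 n0 n1 n2 n3 : ℝ)
    (h1 : |m1| ≤ R) (h0 : |m0| ≤ R) (h2 : |n2| ≤ R) (h3 : |n3| ≤ R)
    (d0 : |m0 - n0| ≤ d) (d1 : |m1 - n1| ≤ d) (d2 : |m2 - n2| ≤ d) (d3 : |m3 - n3| ≤ d) :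
    |k * (m1 * m2 - m0 * m3) - k * (n1 * n2 - n0 * n3)| ≤ k * (4 * R * d) := by
  have e : k * (m1 * m2 - m0 * m3) - k * (n1 * n2 - n0 * n3) =
    k * (m1 * (m2 - n2) + (m1 - n1) * n2 - m0 * (m3 - n3) - (m0 - n0) * n3) := by ring
  rw [e, abs_mul, abs_of_nonneg hk]
  refine mul_le_mul_of_nonneg_left ?_ hk
  have b : ∀ u v A B : ℝ, |u| ≤ A → |v| ≤ B → |u * v| ≤ A * B := fun u v A B hu hv => by
    rw [abs_mul]
    exact mul_le_mul hu hv (abs_nonneg _) ((abs_nonneg _).trans hu)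
  have q1 := abs_le.1 (b _ _ _ _ h1 d2)
  have q2 := abs_le.1 (b _ _ _ _ d1 h2)
  have q3 := abs_le.1 (b _ _ _ _ h0 d3)
  have q4 := abs_le.1 (b _ _ _ _ d0 h3)
  rw [abs_le]
  constructor <;> linarith [q1.1, q1.2, q2.1, q2.2, q3.1, q3.2, q4.1, q4.2]

/-- Choice of the weights for the four velocities. -/
lemma step_lemma (c T a₁ b₁ a₂ b₂ : ℝ) (hc : 0 < c) (i : Fin 4)
    (z : Fin 4 → ℝ → ℝ → ℝ → ℝ) (zt zx zy : ℝ → ℝ → ℝ → ℝ)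
    (hz : ContinuousOn (fun p : ℝ × ℝ × ℝ => z i p.1 p.2.1 p.2.2)
      (Icc 0 T ×ˢ Icc a₁ b₁ ×ˢ Icc a₂ b₂))
    (hb0 : ∀ x ∈ Icc a₁ b₁, ∀ y ∈ Icc a₂ b₂, z i 0 x y ≤ 0)
    (hb1 : ∀ t ∈ Icc 0 T, ∀ y ∈ Icc a₂ b₂, z 0 t a₁ y ≤ 0)
    (hb2 : ∀ t ∈ Icc 0 T, ∀ x ∈ Icc a₁ b₁, z 1 t x a₂ ≤ 0)
    (hb3 : ∀ t ∈ Icc 0 T, ∀ x ∈ Icc a₁ b₁, z 2 t x b₂ ≤ 0)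
    (hb4 : ∀ t ∈ Icc 0 T, ∀ y ∈ Icc a₂ b₂, z 3 t b₁ y ≤ 0)
    (hzt : ∀ t ∈ Ioo 0 T, ∀ x ∈ Ioo a₁ b₁, ∀ y ∈ Ioo a₂ b₂,
      HasDerivAt (fun u => z i u x y) (zt t x y) t)
    (hzx : ∀ t ∈ Ioo 0 T, ∀ x ∈ Ioo a₁ b₁, ∀ y ∈ Ioo a₂ b₂,
      HasDerivAt (fun u => z i t u y) (zx t x y) x)
    (hzy : ∀ t ∈ Ioo 0 T, ∀ x ∈ Ioo a₁ b₁, ∀ y ∈ Ioo a₂ b₂,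
      HasDerivAt (fun u => z i t x u) (zy t x y) y)
    (t₀ x₀ y₀ : ℝ) (ht₀ : t₀ ∈ Ioo 0 T) (hx₀ : x₀ ∈ Ioo a₁ b₁) (hy₀ : y₀ ∈ Ioo a₂ b₂)
    (hq : 0 < z i t₀ x₀ y₀) :
    ∃ t ∈ Ioo 0 T, ∃ x ∈ Ioo a₁ b₁, ∃ y ∈ Ioo a₂ b₂,
      z i t₀ x₀ y₀ / 2 ≤ z i t x y ∧
        0 ≤ zt t x y + spX c i * zx t x y + spY c i * zy t x y := by
  have up : ∀ a x : ℝ, HasDerivAt (fun u => u - a) ((fun _ => (1:ℝ)) x) x :=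
    fun a x => (hasDerivAt_id x).sub_const a
  have dn : ∀ b x : ℝ, HasDerivAt (fun u => b - u) ((fun _ => (-1:ℝ)) x) x :=
    fun b x => (hasDerivAt_id x).const_sub b
  have bt : ∀ a b x : ℝ, HasDerivAt (fun u => (u - a) * (b - u))
      ((fun x => 1 * (b - x) + (x - a) * (-1)) x) x :=
    fun a b x => (up a x).mul (dn b x)
  have u0 : ∀ a b : ℝ, ∀ x ∈ Icc a b, 0 ≤ x - a := fun a b x hx => by linarith [hx.1]
  have u1 : ∀ a b : ℝ, ∀ x ∈ Ioo a b, 0 < x - a := fun a b x hx => by linarith [hx.1]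
  have v0 : ∀ a b : ℝ, ∀ x ∈ Icc a b, 0 ≤ b - x := fun a b x hx => by linarith [hx.2]
  have v1 : ∀ a b : ℝ, ∀ x ∈ Ioo a b, 0 < b - x := fun a b x hx => by linarith [hx.2]
  have w0 : ∀ a b : ℝ, ∀ x ∈ Icc a b, 0 ≤ (x - a) * (b - x) :=
    fun a b x hx => mul_nonneg (u0 a b x hx) (v0 a b x hx)
  have w1 : ∀ a b : ℝ, ∀ x ∈ Ioo a b, 0 < (x - a) * (b - x) :=
    fun a b x hx => mul_pos (u1 a b x hx) (v1 a b x hx)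
  fin_cases i
  · exact max_lemma_prod T a₁ b₁ a₂ b₂ _ _ _ zt zx zy _ _ _ _ hz (dn b₁) (bt a₂ b₂)
      (v0 _ _) (w0 _ _) (v1 _ _) (w1 _ _) (by simp [spX]; intros; linarith) (by simp [spY])
      hb0 (Or.inr hb1) (Or.inl (by simp)) (Or.inl (by simp)) (Or.inl (by simp))
      hzt hzx hzy t₀ x₀ y₀ ht₀ hx₀ hy₀ hq
  · exact max_lemma_prod T a₁ b₁ a₂ b₂ _ _ _ zt zx zy _ _ _ _ hz (bt a₁ b₁) (dn b₂)
      (w0 _ _) (v0 _ _) (w1 _ _) (v1 _ _) (by simp [spX]) (by simp [spY]; intros; linarith)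
      hb0 (Or.inl (by simp)) (Or.inl (by simp)) (Or.inr hb2) (Or.inl (by simp))
      hzt hzx hzy t₀ x₀ y₀ ht₀ hx₀ hy₀ hq
  · exact max_lemma_prod T a₁ b₁ a₂ b₂ _ _ _ zt zx zy _ _ _ _ hz (bt a₁ b₁) (up a₂)
      (w0 _ _) (u0 _ _) (w1 _ _) (u1 _ _) (by simp [spX]) (by simp [spY]; intros; linarith)
      hb0 (Or.inl (by simp)) (Or.inl (by simp)) (Or.inl (by simp)) (Or.inr hb3)
      hzt hzx hzy t₀ x₀ y₀ ht₀ hx₀ hy₀ hq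
  · exact max_lemma_prod T a₁ b₁ a₂ b₂ _ _ _ zt zx zy _ _ _ _ hz (up a₁) (bt a₂ b₂)
      (u0 _ _) (w0 _ _) (u1 _ _) (w1 _ _) (by simp [spX]; intros; linarith) (by simp [spY])
      hb0 (Or.inl (by simp)) (Or.inr hb4) (Or.inl (by simp)) (Or.inl (by simp))
      hzt hzx hzy t₀ x₀ y₀ ht₀ hx₀ hy₀ hq

/-- Uniqueness of classical solutions to the problem `Σ` on the unbounded time interval. -/
theorem broadwell_uniqueness_global
    (c S a₁ b₁ a₂ b₂ : ℝ) (hc : 0 < c) (hS : 0 < S)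
    (ha : a₁ < b₁) (hb : a₂ < b₂)
    (N0 : Fin 4 → ℝ → ℝ → ℝ) (B1 B2 B3 B4 : ℝ → ℝ → ℝ)
    (hdata : NiceData (Ici (0:ℝ)) 0 a₁ b₁ a₂ b₂ N0 B1 B2 B3 B4)
    (M N : Fin 4 → ℝ → ℝ → ℝ → ℝ)
    (hM : IsSol c S (Ici (0:ℝ)) 0 a₁ b₁ a₂ b₂ N0 B1 B2 B3 B4 M)
    (hN : IsSol c S (Ici (0:ℝ)) 0 a₁ b₁ a₂ b₂ N0 B1 B2 B3 B4 N) :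
    ∀ i : Fin 4, ∀ p ∈ PsetT (Ici (0:ℝ)) a₁ b₁ a₂ b₂, M i p.1 p.2.1 p.2.2 = N i p.1 p.2.1 p.2.2 := by
  rintro i₁ ⟨t₁, x₁, y₁⟩ ⟨ht₁, hx₁, hy₁⟩
  simp only [mem_Ici] at ht₁ hx₁ hy₁ ⊢
  obtain ⟨T, hT⟩ : ∃ T, T = t₁ + 1 := ⟨_, rfl⟩
  have hT0 : 0 < T := by linarith
  obtain ⟨K, hKdef⟩ : ∃ K : Set (ℝ × ℝ × ℝ), K = Icc 0 T ×ˢ Icc a₁ b₁ ×ˢ Icc a₂ b₂ := ⟨_, rfl⟩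
  have hK : IsCompact K := hKdef ▸ isCompact_Icc.prod (isCompact_Icc.prod isCompact_Icc)
  have hKP : K ⊆ PsetT (Ici (0:ℝ)) a₁ b₁ a₂ b₂ := by
    rw [hKdef]; exact prod_mono Icc_subset_Ici_self subset_rfl
  obtain ⟨cM, pM, eM, iM, m1, m2, m3, m4⟩ := hM
  obtain ⟨cN, pN, eN, iN, n1, n2, n3, n4⟩ := hN
  have hint : interior (PsetT (Ici (0:ℝ)) a₁ b₁ a₂ b₂) = Ioi 0 ×ˢ Ioo a₁ b₁ ×ˢ Ioo a₂ b₂ := by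
    rw [PsetT, interior_prod_eq, interior_prod_eq, interior_Ici, interior_Icc, interior_Icc]
  rw [hint] at pM eM pN eN
  have cM' : ∀ i, ContinuousOn (fun p : ℝ × ℝ × ℝ => M i p.1 p.2.1 p.2.2) K :=
    fun i => (cM i).mono hKP
  have cN' : ∀ i, ContinuousOn (fun p : ℝ × ℝ × ℝ => N i p.1 p.2.1 p.2.2) K :=
    fun i => (cN i).mono hKP
  obtain ⟨R₁, hR₁⟩ := hK.exists_bound_of_continuousOn
    (f := fun p : ℝ × ℝ × ℝ => fun i => M i p.1 p.2.1 p.2.2) (continuousOn_pi.2 cM')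
  obtain ⟨R₂, hR₂⟩ := hK.exists_bound_of_continuousOn
    (f := fun p : ℝ × ℝ × ℝ => fun i => N i p.1 p.2.1 p.2.2) (continuousOn_pi.2 cN')
  obtain ⟨R, hR⟩ : ∃ R, R = max R₁ R₂ := ⟨_, rfl⟩
  have bM : ∀ p ∈ K, ∀ i, |M i p.1 p.2.1 p.2.2| ≤ R := fun p hp i =>
    (norm_le_pi_norm (fun i => M i p.1 p.2.1 p.2.2) i).trans
      ((hR₁ p hp).trans (hR ▸ le_max_left _ _))
  have bN : ∀ p ∈ K, ∀ i, |N i p.1 p.2.1 p.2.2| ≤ R := fun p hp i =>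
    (norm_le_pi_norm (fun i => N i p.1 p.2.1 p.2.2) i).trans
      ((hR₂ p hp).trans (hR ▸ le_max_right _ _))
  obtain ⟨L, hL⟩ : ∃ L, L = 4 * (2 * c * S * (4 * R)) + 1 := ⟨_, rfl⟩
  obtain ⟨z, hzdef⟩ : ∃ z : Fin 4 → ℝ → ℝ → ℝ → ℝ,
    z = fun i t x y => Real.exp (-(L * t)) * (M i t x y - N i t x y) := ⟨_, rfl⟩
  have cz : ∀ i, ContinuousOn (fun p : ℝ × ℝ × ℝ => z i p.1 p.2.1 p.2.2) K := by
    intro i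
    rw [hzdef]
    exact ContinuousOn.mul (by fun_prop) ((cM' i).sub (cN' i))
  have cG : ContinuousOn (fun p : ℝ × ℝ × ℝ => fun i => z i p.1 p.2.1 p.2.2) K :=
    continuousOn_pi.2 cz
  have hp₁ : (t₁, x₁, y₁) ∈ K := by
    rw [hKdef]; exact ⟨⟨ht₁, by simp only; linarith⟩, hx₁, hy₁⟩
  obtain ⟨p₀, hp₀, hmax⟩ := hK.exists_isMaxOn ⟨_, hp₁⟩ cG.norm
  obtain ⟨m, hm⟩ : ∃ m, m = ‖fun i => z i p₀.1 p₀.2.1 p₀.2.2‖ := ⟨_, rfl⟩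
  have hzm : ∀ p ∈ K, ∀ i, |z i p.1 p.2.1 p.2.2| ≤ m := fun p hp i =>
    (norm_le_pi_norm (fun i => z i p.1 p.2.1 p.2.2) i).trans (hm ▸ hmax hp)
  have hm0 : 0 ≤ m := hm ▸ norm_nonneg _
  rcases hm0.eq_or_lt with hmz | hmpos
  · have h := hzm _ hp₁ i₁
    rw [← hmz] at h
    have h' := abs_nonpos_iff.1 h
    rw [hzdef] at h'
    have := (mul_eq_zero.1 h').resolve_left (Real.exp_pos _).ne'
    exact sub_eq_zero.1 this
  exfalso
  -- an interior point where the norm exceeds `m / 2`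
  obtain ⟨q, hqI, hqm⟩ : ∃ q ∈ Ioo 0 T ×ˢ Ioo a₁ b₁ ×ˢ Ioo a₂ b₂,
      m / 2 < ‖fun i => z i q.1 q.2.1 q.2.2‖ := by
    have hcl : K = closure (Ioo 0 T ×ˢ Ioo a₁ b₁ ×ˢ Ioo a₂ b₂) := by
      rw [closure_prod_eq, closure_prod_eq, closure_Ioo hT0.ne, closure_Ioo ha.ne,
        closure_Ioo hb.ne, hKdef]
    have hIK : Ioo 0 T ×ˢ Ioo a₁ b₁ ×ˢ Ioo a₂ b₂ ⊆ K := by rw [hcl]; exact subset_closure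
    have hp₀' := hp₀
    rw [hcl] at hp₀'
    have hne := mem_closure_iff_nhdsWithin_neBot.1 hp₀'
    have htend := ((cG.norm) p₀ hp₀).mono hIK
    have hev := htend.eventually (lt_mem_nhds (show m / 2 < _ from by simp only [← hm]; linarith))
    obtain ⟨q, h1, h2⟩ := (hev.and self_mem_nhdsWithin).exists
    exact ⟨q, h2, h1⟩
  obtain ⟨i, hi⟩ : ∃ i, m / 2 < |z i q.1 q.2.1 q.2.2| := by
    by_contra h
    push Not at h
    exact absurd ((pi_norm_le_iff_of_nonneg (by linarith)).2 h) (not_le.2 hqm)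
  obtain ⟨σ, hσ, hσi⟩ : ∃ σ : ℝ, |σ| = 1 ∧ m / 2 < σ * z i q.1 q.2.1 q.2.2 := by
    rcases le_total 0 (z i q.1 q.2.1 q.2.2) with h | h
    · exact ⟨1, by simp, by rwa [abs_of_nonneg h, ← one_mul (z i _ _ _)] at hi⟩
    · exact ⟨-1, by simp, by rw [abs_of_nonpos h] at hi; linarith⟩
  have hqI' := hqI
  obtain ⟨hq1, hq2, hq3⟩ := hqI'
  have sub0 : ∀ i t x y, M i t x y = N i t x y → σ * z i t x y ≤ 0 := by
    intro i t x y h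
    rw [hzdef]; simp [h]
  have memI : ∀ t ∈ Ioo 0 T, ∀ x ∈ Ioo a₁ b₁, ∀ y ∈ Ioo a₂ b₂,
      (t, x, y) ∈ Ioi (0:ℝ) ×ˢ Ioo a₁ b₁ ×ˢ Ioo a₂ b₂ :=
    fun t ht x hx y hy => ⟨ht.1, hx, hy⟩
  obtain ⟨t, ht, x, hx, y, hy, hge, hDge⟩ := step_lemma c T a₁ b₁ a₂ b₂ hc i
    (fun i t x y => σ * z i t x y)
    (fun t x y => σ * (Real.exp (-(L * t)) * (-L) * (M i t x y - N i t x y) +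
      Real.exp (-(L * t)) * (pdtF (M i) t x y - pdtF (N i) t x y)))
    (fun t x y => σ * (Real.exp (-(L * t)) * (pdxF (M i) t x y - pdxF (N i) t x y)))
    (fun t x y => σ * (Real.exp (-(L * t)) * (pdyF (M i) t x y - pdyF (N i) t x y)))
    (hKdef ▸ continuousOn_const.mul (cz i))
    (fun x hx y hy => sub0 _ _ _ _ ((iM i x hx y hy).trans (iN i x hx y hy).symm))
    (fun t ht y hy => sub0 _ _ _ _ ((m1 t ht.1 y hy).trans (n1 t ht.1 y hy).symm))
    (fun t ht y hy => sub0 _ _ _ _ ((m2 t ht.1 y hy).trans (n2 t ht.1 y hy).symm))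
    (fun t ht y hy => sub0 _ _ _ _ ((m3 t ht.1 y hy).trans (n3 t ht.1 y hy).symm))
    (fun t ht y hy => sub0 _ _ _ _ ((m4 t ht.1 y hy).trans (n4 t ht.1 y hy).symm))
    (fun t ht x hx y hy => by
      rw [hzdef]
      have h1 := (pM i _ (memI t ht x hx y hy)).1.hasDerivAt
      have h2 := (pN i _ (memI t ht x hx y hy)).1.hasDerivAt
      have h3 : HasDerivAt (fun u => Real.exp (-(L * u))) (Real.exp (-(L * t)) * (-L)) t := by
        have := (((hasDerivAt_id t).const_mul L).neg).exp
        simpa using this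
      exact (h3.mul (h1.sub h2)).const_mul σ)
    (fun t ht x hx y hy => by
      rw [hzdef]
      have h1 := (pM i _ (memI t ht x hx y hy)).2.1.hasDerivAt
      have h2 := (pN i _ (memI t ht x hx y hy)).2.1.hasDerivAt
      exact ((h1.sub h2).const_mul _).const_mul σ)
    (fun t ht x hx y hy => by
      rw [hzdef]
      have h1 := (pM i _ (memI t ht x hx y hy)).2.2.hasDerivAt
      have h2 := (pN i _ (memI t ht x hx y hy)).2.2.hasDerivAt
      exact ((h1.sub h2).const_mul _).const_mul σ)
    q.1 q.2.1 q.2.2 hq1 hq2 hq3 (by linarith)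
  have e1 := eM i _ (memI t ht x hx y hy)
  have e2 := eN i _ (memI t ht x hx y hy)
  simp only at e1 e2
  have hpK : (t, x, y) ∈ K := by
    rw [hKdef]
    exact ⟨Ioo_subset_Icc_self ht, Ioo_subset_Icc_self hx, Ioo_subset_Icc_self hy⟩
  have hEpos := Real.exp_pos (-(L * t))
  have hzi : z i t x y = Real.exp (-(L * t)) * (M i t x y - N i t x y) := by rw [hzdef]
  have hd : ∀ j, |M j t x y - N j t x y| ≤ m / Real.exp (-(L * t)) := by
    intro j
    have := hzm _ hpK j
    rw [hzdef] at this
    simp only [abs_mul, Real.abs_exp] at this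
    rw [le_div_iff₀ hEpos]
    linarith
  have hQ : |QQ c S M t x y - QQ c S N t x y| ≤
      2 * c * S * (4 * R * (m / Real.exp (-(L * t)))) :=
    q_est (2 * c * S) R _ (by positivity) _ _ _ _ _ _ _ _ (bM _ hpK 1) (bM _ hpK 0)
      (bN _ hpK 2) (bN _ hpK 3) (hd 0) (hd 1) (hd 2) (hd 3)
  have hsg : |sgn4 i| = 1 := by fin_cases i <;> simp [sgn4]
  have hbound : σ * (Real.exp (-(L * t)) * (sgn4 i * (QQ c S M t x y - QQ c S N t x y))) ≤
      2 * c * S * (4 * R) * m := by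
    refine (le_abs_self _).trans ?_
    rw [abs_mul, abs_mul, abs_mul, hσ, hsg, Real.abs_exp, one_mul, one_mul]
    refine (mul_le_mul_of_nonneg_left hQ hEpos.le).trans (le_of_eq ?_)
    field_simp
  have hfin : 0 ≤ -L * (σ * z i t x y) +
      σ * (Real.exp (-(L * t)) * (sgn4 i * (QQ c S M t x y - QQ c S N t x y))) := by
    refine hDge.trans (le_of_eq ?_)
    rw [hzi]
    linear_combination σ * Real.exp (-(L * t)) * (e1 - e2)
  have hRn : 0 ≤ R := (abs_nonneg _).trans (bM _ hpK 0)
  have hLpos : 0 < L := by rw [hL]; positivity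
  have h4 : L * (m / 4) ≤ L * (σ * z i t x y) :=
    mul_le_mul_of_nonneg_left (by linarith) hLpos.le
  have h5 : L * (m / 4) = 2 * c * S * (4 * R) * m + m / 4 := by rw [hL]; ring
  linarith

end
end

section
/- Equip C(𝒫;ℝ) with the sup norm ‖u‖∞ and C(𝒫;ℝ)⁴ with the norm ‖N‖ = max_{1≤i≤4} ‖N_i‖∞. Then the operator 𝒯 : C(𝒫;ℝ)⁴ → C(𝒫;ℝ)⁴ is continuous. -/
open Set MeasureTheory

noncomputable section

/-- Pointwise values are bounded by the sup norm over the compact slab. -/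
theorem abs_le_supNorm3 {τ τ' a₁ b₁ a₂ b₂ : ℝ} {f : ℝ → ℝ → ℝ → ℝ}
    (hf : Cont3 f (PsetT (Icc τ τ') a₁ b₁ a₂ b₂)) {t x y : ℝ}
    (h : (t, x, y) ∈ PsetT (Icc τ τ') a₁ b₁ a₂ b₂) :
    |f t x y| ≤ supNorm3 (PsetT (Icc τ τ') a₁ b₁ a₂ b₂) f := by
  have hK : IsCompact (PsetT (Icc τ τ') a₁ b₁ a₂ b₂) :=
    isCompact_Icc.prod (isCompact_Icc.prod isCompact_Icc)
  have hb := (hK.image_of_continuousOn (ContinuousOn.abs hf)).bddAbove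
  exact le_csSup hb ⟨(t, x, y), h, rfl⟩

/-- Elementary Lipschitz estimate for the collision term. -/
theorem QQ_diff_le {c S K η : ℝ} (hc : 0 < c) (hS : 0 < S) (hη1 : η ≤ 1)
    (M N : Fin 4 → ℝ → ℝ → ℝ → ℝ) (t x y : ℝ)
    (hN : ∀ i, |N i t x y| ≤ K) (hM : ∀ i, |M i t x y - N i t x y| ≤ η) :
    |QQ c S M t x y - QQ c S N t x y| ≤ 2 * c * S * (2 * (2 * K + 1)) * η := by
  have key : ∀ i j, |M i t x y * M j t x y - N i t x y * N j t x y| ≤ (2 * K + 1) * η := by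
    intro i j
    have hη : 0 ≤ η := (abs_nonneg _).trans (hM i)
    have hK : 0 ≤ K := (abs_nonneg _).trans (hN i)
    have hMj : |M j t x y| ≤ K + 1 := by
      have := abs_add_le (M j t x y - N j t x y) (N j t x y)
      rw [sub_add_cancel] at this
      linarith [hM j, hN j]
    calc |M i t x y * M j t x y - N i t x y * N j t x y|
        = |(M i t x y - N i t x y) * M j t x y + N i t x y * (M j t x y - N j t x y)| := by
          congr 1; ring
      _ ≤ |M i t x y - N i t x y| * |M j t x y| + |N i t x y| * |M j t x y - N j t x y| := by
          rw [← abs_mul, ← abs_mul]; exact abs_add_le _ _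
      _ ≤ η * (K + 1) + K * η := by
          gcongr
          exacts [hM i, hN i, hM j]
      _ = (2 * K + 1) * η := by ring
  have e : QQ c S M t x y - QQ c S N t x y = 2 * c * S *
      ((M 1 t x y * M 2 t x y - N 1 t x y * N 2 t x y) -
        (M 0 t x y * M 3 t x y - N 0 t x y * N 3 t x y)) := by
    unfold QQ; ring
  have h2 : (0:ℝ) < 2 * c * S := by positivity
  rw [e, abs_mul, abs_of_pos h2, mul_assoc (2 * c * S)]
  refine mul_le_mul_of_nonneg_left ?_ h2.le
  have := abs_sub (M 1 t x y * M 2 t x y - N 1 t x y * N 2 t x y)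
    (M 0 t x y * M 3 t x y - N 0 t x y * N 3 t x y)
  linarith [key 1 2, key 0 3]

/-- Continuity of the collision term along a path. -/
theorem QQ_path_integrable {c S τ τ' a₁ b₁ a₂ b₂ t0 t : ℝ} (M : Fin 4 → ℝ → ℝ → ℝ → ℝ)
    (hM : ∀ i, Cont3 (M i) (PsetT (Icc τ τ') a₁ b₁ a₂ b₂)) (X Y : ℝ → ℝ)
    (hX : Continuous X) (hY : Continuous Y) (h0 : t0 ≤ t)
    (hP : ∀ s ∈ Icc t0 t, (s, X s, Y s) ∈ PsetT (Icc τ τ') a₁ b₁ a₂ b₂) :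
    IntervalIntegrable (fun s => QQ c S M s (X s) (Y s)) volume t0 t := by
  apply ContinuousOn.intervalIntegrable
  rw [uIcc_of_le h0]
  have hi : ∀ i, ContinuousOn (fun s => M i s (X s) (Y s)) (Icc t0 t) := fun i =>
    ContinuousOn.comp (g := fun p : ℝ × ℝ × ℝ => M i p.1 p.2.1 p.2.2)
      (f := fun s => (s, X s, Y s)) (hM i) (by fun_prop) hP
  exact continuousOn_const.mul (((hi 1).mul (hi 2)).sub ((hi 0).mul (hi 3)))

/-- Difference of the integrals of the collision terms along a path inside the slab. -/
theorem path_est {c S τ τ' a₁ b₁ a₂ b₂ t0 t L : ℝ} (M N : Fin 4 → ℝ → ℝ → ℝ → ℝ)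
    (hM : ∀ i, Cont3 (M i) (PsetT (Icc τ τ') a₁ b₁ a₂ b₂))
    (hN : ∀ i, Cont3 (N i) (PsetT (Icc τ τ') a₁ b₁ a₂ b₂))
    (hL : ∀ s x y, (s, x, y) ∈ PsetT (Icc τ τ') a₁ b₁ a₂ b₂ →
      |QQ c S M s x y - QQ c S N s x y| ≤ L)
    (X Y : ℝ → ℝ) (hX : Continuous X) (hY : Continuous Y) (h0 : t0 ≤ t)
    (hP : ∀ s ∈ Icc t0 t, (s, X s, Y s) ∈ PsetT (Icc τ τ') a₁ b₁ a₂ b₂) :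
    |(∫ s in t0..t, QQ c S M s (X s) (Y s)) - ∫ s in t0..t, QQ c S N s (X s) (Y s)|
      ≤ L * (τ' - τ) := by
  rw [← intervalIntegral.integral_sub (QQ_path_integrable M hM X Y hX hY h0 hP)
    (QQ_path_integrable N hN X Y hX hY h0 hP)]
  have h1 := intervalIntegral.norm_integral_le_of_norm_le_const (a := t0) (b := t) (C := L)
    (f := fun s => QQ c S M s (X s) (Y s) - QQ c S N s (X s) (Y s)) (by
      intro s hs
      rw [uIoc_of_le h0] at hs
      exact hL _ _ _ (hP s ⟨hs.1.le, hs.2⟩))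
  rw [Real.norm_eq_abs, abs_of_nonneg (sub_nonneg.2 h0)] at h1
  have hl := hP t0 ⟨le_rfl, h0⟩
  have hr := hP t ⟨h0, le_rfl⟩
  have hL0 : 0 ≤ L := (abs_nonneg _).trans (hL _ _ _ hl)
  refine h1.trans (mul_le_mul_of_nonneg_left ?_ hL0)
  linarith [hl.1.1, hr.1.2]

/-- Pointwise estimate for the difference of the images under the operator. -/
theorem Tcal_diff {c S τ τ' a₁ b₁ a₂ b₂ L : ℝ} (hc : 0 < c)
    (N0 : Fin 4 → ℝ → ℝ → ℝ) (B1 B2 B3 B4 : ℝ → ℝ → ℝ) (M N : Fin 4 → ℝ → ℝ → ℝ → ℝ)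
    (hM : ∀ i, Cont3 (M i) (PsetT (Icc τ τ') a₁ b₁ a₂ b₂))
    (hN : ∀ i, Cont3 (N i) (PsetT (Icc τ τ') a₁ b₁ a₂ b₂))
    (hL : ∀ s x y, (s, x, y) ∈ PsetT (Icc τ τ') a₁ b₁ a₂ b₂ →
      |QQ c S M s x y - QQ c S N s x y| ≤ L)
    (t x y : ℝ) (hp : (t, x, y) ∈ PsetT (Icc τ τ') a₁ b₁ a₂ b₂) (i : Fin 4) :
    |Tcal c S τ a₁ b₁ a₂ b₂ N0 B1 B2 B3 B4 M i t x y -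
      Tcal c S τ a₁ b₁ a₂ b₂ N0 B1 B2 B3 B4 N i t x y| ≤ L * (τ' - τ) := by
  obtain ⟨⟨ht1, ht2⟩, ⟨hx1, hx2⟩, ⟨hy1, hy2⟩⟩ := hp
  simp only at ht1 ht2 hx1 hx2 hy1 hy2
  -- characteristic times
  have tm : ∀ d, 0 ≤ d → ∀ s, t - d / c ≤ s → -d ≤ c * (s - t) := by
    intro d _ s hs
    have h : c * (d / c) = d := by field_simp
    nlinarith
  have tb : ∀ d, d < c * (t - τ) → τ ≤ t - d / c := by
    intro d hd
    have : d / c < t - τ := by rw [div_lt_iff₀ hc]; linarith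
    linarith
  have tn : ∀ d, 0 ≤ d → t - d / c ≤ t := by
    intro d hd
    have : 0 ≤ d / c := by positivity
    linarith
  have up : ∀ s, s ≤ t → c * (s - t) ≤ 0 := fun s hs => by nlinarith
  have lo : ∀ s, τ ≤ s → -(c * (t - τ)) ≤ c * (s - t) := fun s hs => by nlinarith
  have P := fun t0 X Y => path_est (t0 := t0) (t := t) M N hM hN hL X Y
  fin_cases i
  · show |(if _ then _ else _) - (if _ then _ else _)| ≤ _
    split_ifs with h
    · rw [add_sub_add_right_eq_sub]
      refine P τ (fun s => x + c * (s - t)) (fun _ => y) (by fun_prop) (by fun_prop) ht1 ?_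
      intro s hs
      have h1 := up s hs.2
      have h2 := lo s hs.1
      exact ⟨⟨hs.1, hs.2.trans ht2⟩, ⟨by dsimp only; linarith, by dsimp only; linarith⟩,
        ⟨hy1, hy2⟩⟩
    · rw [add_sub_add_right_eq_sub]
      have hd : 0 ≤ x - a₁ := by linarith
      have h3 := tb (x - a₁) (by linarith)
      refine P _ (fun s => x + c * (s - t)) (fun _ => y) (by fun_prop) (by fun_prop)
        (tn _ hd) ?_
      intro s hs
      have h1 := up s hs.2
      have h2 := tm _ hd s hs.1
      exact ⟨⟨h3.trans hs.1, hs.2.trans ht2⟩,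
        ⟨by dsimp only; linarith, by dsimp only; linarith⟩, ⟨hy1, hy2⟩⟩
  · show |(if _ then _ else _) - (if _ then _ else _)| ≤ _
    split_ifs with h
    · rw [add_sub_add_right_eq_sub, intervalIntegral.integral_neg, intervalIntegral.integral_neg,
        neg_sub_neg, abs_sub_comm]
      refine P τ (fun _ => x) (fun s => y + c * (s - t)) (by fun_prop) (by fun_prop) ht1 ?_
      intro s hs
      have h1 := up s hs.2
      have h2 := lo s hs.1
      exact ⟨⟨hs.1, hs.2.trans ht2⟩, ⟨hx1, hx2⟩,
        ⟨by dsimp only; linarith, by dsimp only; linarith⟩⟩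
    · rw [add_sub_add_right_eq_sub, intervalIntegral.integral_neg, intervalIntegral.integral_neg,
        neg_sub_neg, abs_sub_comm]
      have hd : 0 ≤ y - a₂ := by linarith
      have h3 := tb (y - a₂) (by linarith)
      refine P _ (fun _ => x) (fun s => y + c * (s - t)) (by fun_prop) (by fun_prop)
        (tn _ hd) ?_
      intro s hs
      have h1 := up s hs.2
      have h2 := tm _ hd s hs.1
      exact ⟨⟨h3.trans hs.1, hs.2.trans ht2⟩, ⟨hx1, hx2⟩,
        ⟨by dsimp only; linarith, by dsimp only; linarith⟩⟩
  · show |(if _ then _ else _) - (if _ then _ else _)| ≤ _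
    split_ifs with h
    · rw [add_sub_add_right_eq_sub, intervalIntegral.integral_neg, intervalIntegral.integral_neg,
        neg_sub_neg, abs_sub_comm]
      refine P τ (fun _ => x) (fun s => y - c * (s - t)) (by fun_prop) (by fun_prop) ht1 ?_
      intro s hs
      have h1 := up s hs.2
      have h2 := lo s hs.1
      exact ⟨⟨hs.1, hs.2.trans ht2⟩, ⟨hx1, hx2⟩,
        ⟨by dsimp only; linarith, by dsimp only; linarith⟩⟩
    · rw [add_sub_add_right_eq_sub, intervalIntegral.integral_neg, intervalIntegral.integral_neg,
        neg_sub_neg, abs_sub_comm]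
      have hd : 0 ≤ b₂ - y := by linarith
      have h3 := tb (b₂ - y) (by linarith)
      refine P _ (fun _ => x) (fun s => y - c * (s - t)) (by fun_prop) (by fun_prop)
        (tn _ hd) ?_
      intro s hs
      have h1 := up s hs.2
      have h2 := tm _ hd s hs.1
      exact ⟨⟨h3.trans hs.1, hs.2.trans ht2⟩, ⟨hx1, hx2⟩,
        ⟨by dsimp only; linarith, by dsimp only; linarith⟩⟩
  · show |(if _ then _ else _) - (if _ then _ else _)| ≤ _
    split_ifs with h
    · rw [add_sub_add_right_eq_sub]
      refine P τ (fun s => x - c * (s - t)) (fun _ => y) (by fun_prop) (by fun_prop) ht1 ?_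
      intro s hs
      have h1 := up s hs.2
      have h2 := lo s hs.1
      exact ⟨⟨hs.1, hs.2.trans ht2⟩, ⟨by dsimp only; linarith, by dsimp only; linarith⟩,
        ⟨hy1, hy2⟩⟩
    · rw [add_sub_add_right_eq_sub]
      have hd : 0 ≤ b₁ - x := by linarith
      have h3 := tb (b₁ - x) (by linarith)
      refine P _ (fun s => x - c * (s - t)) (fun _ => y) (by fun_prop) (by fun_prop)
        (tn _ hd) ?_
      intro s hs
      have h1 := up s hs.2
      have h2 := tm _ hd s hs.1
      exact ⟨⟨h3.trans hs.1, hs.2.trans ht2⟩,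
        ⟨by dsimp only; linarith, by dsimp only; linarith⟩, ⟨hy1, hy2⟩⟩

/-- Each component is bounded by the maximum norm. -/
theorem supNorm3_le_norm4 (D : Set (ℝ × ℝ × ℝ)) (M : Fin 4 → ℝ → ℝ → ℝ → ℝ) (i : Fin 4) :
    supNorm3 D (M i) ≤ norm4 D M := by
  unfold norm4
  fin_cases i <;> simp

/-- Continuity of the operator `𝒯` on `C(𝒫;ℝ)⁴` for the sup norm. -/
theorem Tcal_continuous
    (c S τ τ' a₁ b₁ a₂ b₂ : ℝ) (hc : 0 < c) (hS : 0 < S)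
    (hτ : τ < τ') (ha : a₁ < b₁) (hb : a₂ < b₂)
    (N0 : Fin 4 → ℝ → ℝ → ℝ) (B1 B2 B3 B4 : ℝ → ℝ → ℝ)
    (hdata : NiceData (Icc τ τ') τ a₁ b₁ a₂ b₂ N0 B1 B2 B3 B4) :
    ∀ N : Fin 4 → ℝ → ℝ → ℝ → ℝ, (∀ i, Cont3 (N i) (PsetT (Icc τ τ') a₁ b₁ a₂ b₂)) →
      ∀ ε > 0, ∃ η > 0, ∀ M : Fin 4 → ℝ → ℝ → ℝ → ℝ,
        (∀ i, Cont3 (M i) (PsetT (Icc τ τ') a₁ b₁ a₂ b₂)) →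
        norm4 (PsetT (Icc τ τ') a₁ b₁ a₂ b₂) (fun i t x y => M i t x y - N i t x y) ≤ η →
        norm4 (PsetT (Icc τ τ') a₁ b₁ a₂ b₂)
          (fun i t x y => Tcal c S τ a₁ b₁ a₂ b₂ N0 B1 B2 B3 B4 M i t x y - Tcal c S τ a₁ b₁ a₂ b₂ N0 B1 B2 B3 B4 N i t x y) ≤ ε := by
  intro N hN ε hε
  set P := PsetT (Icc τ τ') a₁ b₁ a₂ b₂ with hP
  set K := norm4 P N with hK
  have hNK : ∀ i t x y, (t, x, y) ∈ P → |N i t x y| ≤ K := fun i t x y h =>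
    (abs_le_supNorm3 (hN i) h).trans (supNorm3_le_norm4 P N i)
  have hmem : (τ, a₁, a₂) ∈ P := ⟨⟨le_rfl, hτ.le⟩, ⟨le_rfl, ha.le⟩, ⟨le_rfl, hb.le⟩⟩
  have hK0 : 0 ≤ K := (abs_nonneg _).trans (hNK 0 _ _ _ hmem)
  have hA : 0 < 2 * c * S * (2 * (2 * K + 1)) * (τ' - τ) := by
    have : 0 < τ' - τ := sub_pos.2 hτ
    positivity
  set A := 2 * c * S * (2 * (2 * K + 1)) * (τ' - τ) with hAdef
  refine ⟨min 1 (ε / A), lt_min one_pos (div_pos hε hA), ?_⟩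
  intro M hM hMN
  have hd : ∀ i t x y, (t, x, y) ∈ P → |M i t x y - N i t x y| ≤ min 1 (ε / A) :=
    fun i t x y h => ((abs_le_supNorm3 (f := fun t x y => M i t x y - N i t x y)
      (ContinuousOn.sub (hM i) (hN i)) h).trans
        (supNorm3_le_norm4 P (fun i t x y => M i t x y - N i t x y) i)).trans hMN
  have hL : ∀ s x y, (s, x, y) ∈ P → |QQ c S M s x y - QQ c S N s x y| ≤
      2 * c * S * (2 * (2 * K + 1)) * min 1 (ε / A) := fun s x y h =>
    QQ_diff_le hc hS (min_le_left _ _) M N s x y (fun i => hNK i s x y h)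
      (fun i => hd i s x y h)
  have hfin : 2 * c * S * (2 * (2 * K + 1)) * min 1 (ε / A) * (τ' - τ) ≤ ε := by
    calc 2 * c * S * (2 * (2 * K + 1)) * min 1 (ε / A) * (τ' - τ) = A * min 1 (ε / A) := by
          rw [hAdef]; ring
      _ ≤ A * (ε / A) := mul_le_mul_of_nonneg_left (min_le_right _ _) hA.le
      _ = ε := mul_div_cancel₀ _ hA.ne'
  have hs : ∀ i, supNorm3 P (fun t x y => Tcal c S τ a₁ b₁ a₂ b₂ N0 B1 B2 B3 B4 M i t x y -
      Tcal c S τ a₁ b₁ a₂ b₂ N0 B1 B2 B3 B4 N i t x y) ≤ ε := by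
    intro i
    apply Real.sSup_le _ hε.le
    rintro _ ⟨⟨t, x, y⟩, hp, rfl⟩
    exact (Tcal_diff hc N0 B1 B2 B3 B4 M N hM hN hL t x y hp i).trans hfin
  exact max_le (max_le (hs 0) (hs 1)) (max_le (hs 2) (hs 3))

end
end
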